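/- arXiv:2212.14265 — 5 statements merged into one kernel-verified Lean document; each statement's English description precedes it below -/
import Mathlib

section
/- Let n ≥ 2k+1. Every (k+1)-crossing-free set F of pairs of {1,…,n} with exactly k(2n−2k−1) − 2 elements is contained in at most five k-triangulations of the n-gon. (Equivalently, all links of dimension one in the multiassociahedron are cycles of length at most five.) -/
open scoped BigOperators

/-- A pair `{i,j}` of distinct vertices of the `n`-gon.  Vertices `1,…,n` are represented by
`Fin n` (vertex `i` corresponds to `i-1 : Fin n`), and a pair is recorded with its endpoints
in increasing order. -/
abbrev Pair (n : ℕ) := {p : Fin n × Fin n // p.1 < p.2}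

/-- Two pairs `{i,j}` (`i<j`) and `{k,l}` (`k<l`) cross if `i<k<j<l` or `k<i<l<j`. -/
def Cross {n : ℕ} (e f : Pair n) : Prop :=
  (e.val.1 < f.val.1 ∧ f.val.1 < e.val.2 ∧ e.val.2 < f.val.2) ∨
  (f.val.1 < e.val.1 ∧ e.val.1 < f.val.2 ∧ f.val.2 < e.val.2)

/-- A set of pairs is `(k+1)`-crossing-free if it contains no `k+1` pairwise crossing pairs. -/
def CrossingFree (n k : ℕ) (S : Set (Pair n)) : Prop :=
  ¬ ∃ C : Finset (Pair n), ↑C ⊆ S ∧ C.card = k + 1 ∧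
      ∀ e ∈ C, ∀ f ∈ C, e ≠ f → Cross e f

/-- A `k`-triangulation of the `n`-gon: an inclusion-maximal `(k+1)`-crossing-free set. -/
def IsTriangulation (n k : ℕ) (T : Set (Pair n)) : Prop :=
  CrossingFree n k T ∧ ∀ S : Set (Pair n), CrossingFree n k S → T ⊆ S → S = T

/-- The length of a pair `{i,j}` with respect to the `N`-gon: `min (j-i) (N-(j-i))`. -/
def pairLen (N : ℕ) {n : ℕ} (e : Pair n) : ℕ :=
  min ((e.val.2 : ℕ) - (e.val.1 : ℕ)) (N - ((e.val.2 : ℕ) - (e.val.1 : ℕ)))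

/-- A pair is `k`-relevant in the `N`-gon if its length is at least `k+1`. -/
def Relevant (N k : ℕ) {n : ℕ} (e : Pair n) : Prop := k + 1 ≤ pairLen N e

/-- The 2×2 determinant `det (u v)` of two plane vectors. -/
def det2 (u v : ℝ × ℝ) : ℝ := u.1 * v.2 - u.2 * v.1

/-- Points in convex position, listed in counterclockwise order along their convex hull:
they are distinct and every triple `i<j<k` is positively oriented. -/
def ConvexPosition {n : ℕ} (q : Fin n → ℝ × ℝ) : Prop :=
  Function.Injective q ∧
  ∀ i j k : Fin n, i < j → j < k → 0 < det2 (q j - q i) (q k - q i)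

/-- `p` lies on the line through `a` and `b`. -/
def onLine (a b p : ℝ × ℝ) : Prop := det2 (b - a) (p - a) = 0

/-- Row of the bar-and-joint rigidity matrix `R(p)` indexed by the pair `e`:
`p_i - p_j` in block `i`, `p_j - p_i` in block `j`, zeros elsewhere. -/
def bjRow {n d : ℕ} (p : Fin n → Fin d → ℝ) (e : Pair n) : Fin n × Fin d → ℝ :=
  fun ma =>
    if ma.1 = e.val.1 then p e.val.1 ma.2 - p e.val.2 ma.2
    else if ma.1 = e.val.2 then p e.val.2 ma.2 - p e.val.1 ma.2
    else 0

/-- Row of the hyperconnectivity matrix `H(p)` indexed by the pair `e`: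
`p_j` in block `i`, `-p_i` in block `j`, zeros elsewhere. -/
def hypRow {n d : ℕ} (p : Fin n → Fin d → ℝ) (e : Pair n) : Fin n × Fin d → ℝ :=
  fun ma =>
    if ma.1 = e.val.1 then p e.val.2 ma.2
    else if ma.1 = e.val.2 then - p e.val.1 ma.2
    else 0

/-- The vector `c_{ij} = ((x_i-x_j)^{d-1}, (x_i-x_j)^{d-2}(y_i-y_j), …, (y_i-y_j)^{d-1})`. -/
def cvec (d : ℕ) (qi qj : ℝ × ℝ) : Fin d → ℝ :=
  fun a => (qi.1 - qj.1) ^ (d - 1 - (a : ℕ)) * (qi.2 - qj.2) ^ (a : ℕ)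

/-- Row of the cofactor rigidity matrix `C_d(q)` indexed by the pair `e`:
`c_{ij}` in block `i`, `-c_{ij}` in block `j`, zeros elsewhere. -/
def cofRow (d : ℕ) {n : ℕ} (q : Fin n → ℝ × ℝ) (e : Pair n) : Fin n × Fin d → ℝ :=
  fun ma =>
    if ma.1 = e.val.1 then cvec d (q e.val.1) (q e.val.2) ma.2
    else if ma.1 = e.val.2 then - cvec d (q e.val.1) (q e.val.2) ma.2
    else 0

/-- `x_{ij} = X_i Z_j - Z_i X_j` for vectors in `ℝ³`. -/
def xQ (Qi Qj : ℝ × ℝ × ℝ) : ℝ := Qi.1 * Qj.2.2 - Qi.2.2 * Qj.1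

/-- `y_{ij} = Y_i Z_j - Z_i Y_j` for vectors in `ℝ³`. -/
def yQ (Qi Qj : ℝ × ℝ × ℝ) : ℝ := Qi.2.1 * Qj.2.2 - Qi.2.2 * Qj.2.1

/-- The vector `c_{ij} = (x_{ij}^{d-1}, x_{ij}^{d-2} y_{ij}, …, y_{ij}^{d-1})`. -/
def gcvec (d : ℕ) (Qi Qj : ℝ × ℝ × ℝ) : Fin d → ℝ :=
  fun a => (xQ Qi Qj) ^ (d - 1 - (a : ℕ)) * (yQ Qi Qj) ^ (a : ℕ)

/-- Row of the generalized cofactor rigidity matrix `C_d(Q)` for vectors in `ℝ³`. -/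
def gcofRow (d : ℕ) {n : ℕ} (Q : Fin n → ℝ × ℝ × ℝ) (e : Pair n) : Fin n × Fin d → ℝ :=
  fun ma =>
    if ma.1 = e.val.1 then gcvec d (Q e.val.1) (Q e.val.2) ma.2
    else if ma.1 = e.val.2 then - gcvec d (Q e.val.1) (Q e.val.2) ma.2
    else 0

/-- The cone of all nonnegative linear combinations of `{v e : e ∈ S}`. -/
def coneOf {n : ℕ} {V : Type*} [AddCommGroup V] [Module ℝ V]
    (v : Pair n → V) (S : Set (Pair n)) : Set V :=
  {x | ∃ c : Pair n → ℝ, (∀ e, 0 ≤ c e) ∧ (∀ e, c e ≠ 0 → e ∈ S) ∧ x = ∑ e, c e • v e}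

/-- The vectors `(v e)` realize the `k`-associahedron of the `n`-gon as a complete
simplicial fan: (a) the vectors of every `k`-triangulation are linearly independent;
(b) cones of two `k`-triangulations intersect in the cone of their intersection;
(c) the union of all the cones is the linear span of all the vectors. -/
def RealizesFan (n k : ℕ) {V : Type*} [AddCommGroup V] [Module ℝ V]
    (v : Pair n → V) : Prop :=
  (∀ T : Set (Pair n), IsTriangulation n k T →
      LinearIndependent ℝ (fun e : T => v e.val)) ∧
  (∀ T T' : Set (Pair n), IsTriangulation n k T → IsTriangulation n k T' →
      coneOf v T ∩ coneOf v T' = coneOf v (T ∩ T')) ∧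
  (⋃ T ∈ {T : Set (Pair n) | IsTriangulation n k T}, coneOf v T) =
    (Submodule.span ℝ (Set.range v) : Set V)

namespace KTri

open Equiv

def stt (q : ℕ → ℕ) (X : Finset ℕ) : ℕ → Perm ℕ
  | 0 => 1
  | t+1 => if t ∈ X then stt q X t * swap (q t) (q t + 1) else stt q X t

def refT (q : ℕ → ℕ) (X : Finset ℕ) (t : ℕ) : Perm ℕ :=
  swap (stt q X t (q t)) (stt q X t (q t + 1))

def Red (q : ℕ → ℕ) (X : Finset ℕ) : Prop :=
  ∀ t ∈ X, stt q X t (q t) < stt q X t (q t + 1)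

/-- labels `x`, `y` are out of order -/
def IsInv (q : ℕ → ℕ) (X : Finset ℕ) (x y t : ℕ) : Prop :=
  (stt q X t).symm y < (stt q X t).symm x

lemma stt_symm_succ (q : ℕ → ℕ) (X : Finset ℕ) (t x : ℕ) :
    (stt q X (t+1)).symm x = if t ∈ X then swap (q t) (q t + 1) ((stt q X t).symm x)
      else (stt q X t).symm x := by
  simp only [stt]
  split_ifs
  · rfl
  · rfl

lemma swap_lt_iff (q u v : ℕ) (h : ¬ (u = q ∧ v = q + 1)) (h' : ¬ (v = q ∧ u = q + 1)) :
    swap q (q+1) u < swap q (q+1) v ↔ u < v := by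
  simp only [swap_apply_def]
  split_ifs <;> omega

lemma inv_succ {q : ℕ → ℕ} {X : Finset ℕ} (hR : Red q X) {x y t : ℕ} (hxy : x < y)
    (h : IsInv q X x y t) : IsInv q X x y (t+1) := by
  unfold IsInv at *
  rw [stt_symm_succ, stt_symm_succ]
  split_ifs with ht
  · rw [swap_lt_iff]
    · exact h
    · rintro ⟨h1, h2⟩
      have := hR t ht
      rw [← h2, ← h1] at this
      simp at this
      omega
    · rintro ⟨h1, h2⟩
      omega
  · exact h

lemma inv_mono {q : ℕ → ℕ} {X : Finset ℕ} (hR : Red q X) {x y s t : ℕ} (hxy : x < y)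
    (hst : s ≤ t) (h : IsInv q X x y s) : IsInv q X x y t := by
  induction hst with
  | refl => exact h
  | step _ ih => exact inv_succ hR hxy ih

lemma inv_new {q : ℕ → ℕ} {X : Finset ℕ} {x y t : ℕ}
    (h : ¬ IsInv q X x y t) (h' : IsInv q X x y (t+1)) :
    t ∈ X ∧ stt q X t (q t) = x ∧ stt q X t (q t + 1) = y := by
  unfold IsInv at *
  rw [stt_symm_succ, stt_symm_succ] at h'
  split_ifs at h' with ht
  · refine ⟨ht, ?_⟩
    by_contra hc
    rw [swap_lt_iff] at h'
    · exact h h'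
    · rintro ⟨h1, h2⟩
      omega
    · rintro ⟨h1, h2⟩
      apply hc
      rw [← h2, ← h1]; simp
  · exact absurd h' h

lemma not_inv_at {q : ℕ → ℕ} {X : Finset ℕ} (t : ℕ) :
    ¬ IsInv q X (stt q X t (q t)) (stt q X t (q t + 1)) t := by
  unfold IsInv; simp

lemma inv_at {q : ℕ → ℕ} {X : Finset ℕ} {t : ℕ} (ht : t ∈ X) :
    IsInv q X (stt q X t (q t)) (stt q X t (q t + 1)) (t+1) := by
  unfold IsInv
  rw [stt_symm_succ, stt_symm_succ]; simp [ht]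

lemma pair_inj {q : ℕ → ℕ} {X : Finset ℕ} (hR : Red q X) {s t : ℕ} (hs : s ∈ X) (ht : t ∈ X)
    (h1 : stt q X s (q s) = stt q X t (q t))
    (h2 : stt q X s (q s + 1) = stt q X t (q t + 1)) : s = t := by
  by_contra hne
  wlog hlt : s < t generalizing s t
  · exact this ht hs h1.symm h2.symm (Ne.symm hne) (by omega)
  have := inv_mono hR (hR s hs) hlt (inv_at hs)
  rw [h1, h2] at this
  exact not_inv_at t this

lemma swap_eq_cases {x y u v : ℕ} (hxy : x ≠ y) (h : swap x y = swap u v) :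
    (x = u ∧ y = v) ∨ (x = v ∧ y = u) := by
  have h1 : y = swap u v x := by rw [← h]; simp
  have h2 : x = swap u v y := by rw [← h]; simp
  rw [swap_apply_def] at h1 h2
  split_ifs at h1 h2 <;> omega

lemma rf_inj {q : ℕ → ℕ} {X : Finset ℕ} (hR : Red q X) {s t : ℕ} (hs : s ∈ X) (ht : t ∈ X)
    (h : refT q X s = refT q X t) : s = t := by
  have a := hR s hs
  have b := hR t ht
  rcases swap_eq_cases a.ne h with h | h
  · exact pair_inj hR hs ht h.1 h.2
  · omega

/-- comparison of two runs -/
lemma stt_compare (q : ℕ → ℕ) (X Y : Finset ℕ) (t : ℕ) :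
    stt q Y t = (((List.range t).filter (fun p => ¬ (p ∈ X ↔ p ∈ Y))).map (refT q X)).prod
      * stt q X t := by
  induction t with
  | zero => simp [stt]
  | succ t ih =>
    rw [List.range_succ, List.filter_append, List.map_append, List.prod_append]
    have key : refT q X t = stt q X t * swap (q t) (q t + 1) * (stt q X t)⁻¹ := by
      rw [refT, Equiv.swap_apply_apply]
    by_cases hX : t ∈ X <;> by_cases hY : t ∈ Y
    · simp [stt, hX, hY, ih, mul_assoc]
    · simp [stt, hX, hY, ih, mul_assoc, key]
    · simp [stt, hX, hY, ih, mul_assoc, key]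
    · simp [stt, hX, hY, ih]

lemma swap_of_eq {x y u v : ℕ} (h : (x = u ∧ y = v) ∨ (x = v ∧ y = u)) : swap x y = swap u v := by
  rcases h with ⟨rfl, rfl⟩ | ⟨rfl, rfl⟩
  · rfl
  · exact swap_comm _ _

lemma swap_four_mem (a b c d x y u v : ℕ) (hxy : x ≠ y)
    (hne : swap a b ≠ swap c d) (h : swap a b * swap c d = swap x y * swap u v) :
    x = a ∨ x = b ∨ x = c ∨ x = d := by
  by_contra hc
  push Not at hc
  obtain ⟨h1, h2, h3, h4⟩ := hc
  have hx : swap x y (swap u v x) = x := by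
    have : (swap a b * swap c d) x = (swap x y * swap u v) x := by rw [h]
    simp only [Perm.mul_apply] at this
    rw [swap_apply_of_ne_of_ne h3 h4, swap_apply_of_ne_of_ne h1 h2] at this
    exact this.symm
  have hy : swap u v x = y := by
    have := congrArg (swap x y) hx
    simpa using this
  have : swap u v = swap x y := by
    apply swap_of_eq
    rw [swap_apply_def] at hy
    split_ifs at hy <;> omega
  rw [this] at h
  apply hne
  have h5 : swap a b * swap c d = 1 := by rw [h]; simp
  have := mul_eq_one_iff_eq_inv.mp h5
  simpa using this

lemma share_aux (a b c d x y : ℕ) (hcd : c ≠ d) (hxy : x ≠ y)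
    (hx : x = a ∨ x = b ∨ x = c ∨ x = d) (hy : y = a ∨ y = b ∨ y = c ∨ y = d)
    (hsh : a = c ∨ a = d ∨ b = c ∨ b = d) :
    ((x = a ∧ y = b) ∨ (x = b ∧ y = a)) ∨ ((x = c ∧ y = d) ∨ (x = d ∧ y = c)) ∨
    ((x = swap a b c ∧ y = swap a b d) ∨ (x = swap a b d ∧ y = swap a b c)) := by
  generalize hu : swap a b c = u
  generalize hv : swap a b d = v
  rw [Equiv.swap_apply_def] at hu hv
  grind

lemma swap_four (a b c d x y u v : ℕ) (hcd : c ≠ d) (hxy : x ≠ y)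
    (hne : swap a b ≠ swap c d) (h : swap a b * swap c d = swap x y * swap u v) :
    swap x y = swap a b ∨ swap x y = swap c d ∨ swap x y = swap a b * swap c d * swap a b := by
  have hx := swap_four_mem a b c d x y u v hxy hne h
  have hy := swap_four_mem a b c d y x u v hxy.symm hne (by rw [h, swap_comm])
  have h' : ∀ z, swap x y (swap a b (swap c d z)) = swap u v z := by
    intro z
    have := congrArg (fun f : Perm ℕ => swap x y (f z)) h
    simpa using this
  have e : swap a b * swap c d * swap a b = swap (swap a b c) (swap a b d) := by
    rw [Equiv.swap_apply_apply]; simp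
  rw [e]
  have k1 : ∀ p r, (x = p ∧ y = r) ∨ (x = r ∧ y = p) → swap x y = swap p r :=
    fun p r => swap_of_eq
  suffices ((x = a ∧ y = b) ∨ (x = b ∧ y = a)) ∨ ((x = c ∧ y = d) ∨ (x = d ∧ y = c)) ∨
    ((x = swap a b c ∧ y = swap a b d) ∨ (x = swap a b d ∧ y = swap a b c)) by
    rcases this with h | h | h
    · exact Or.inl (k1 _ _ h)
    · exact Or.inr (Or.inl (k1 _ _ h))
    · exact Or.inr (Or.inr (k1 _ _ h))
  have hF : ∀ z, swap x y (swap a b (swap c d (swap x y (swap a b (swap c d z))))) = z := by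
    intro z; rw [h', h']; simp
  clear h' h e hne k1
  by_cases hsh : a = c ∨ a = d ∨ b = c ∨ b = d
  · exact share_aux a b c d x y hcd hxy hx hy hsh
  push Not at hsh
  obtain ⟨h1, h2, h3, h4⟩ := hsh
  have hF' : ∀ z, swap y x (swap a b (swap c d (swap y x (swap a b (swap c d z))))) = z := by
    rw [swap_comm y x]; exact hF
  have A : ∀ (p p' r r' : ℕ), p ≠ r → p' ≠ r → p ≠ r' → p' ≠ r' → r ≠ r' →
      ¬ ∀ z, swap p r (swap p p' (swap r r' (swap p r (swap p p' (swap r r' z))))) = z := by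
    intro p p' r r' e1 e2 e3 e4 e5 hh
    have := hh r
    rw [swap_apply_left, swap_apply_of_ne_of_ne e3.symm e4.symm,
      swap_apply_of_ne_of_ne e3.symm e5.symm, swap_apply_right,
      swap_apply_of_ne_of_ne e1.symm e2.symm, swap_apply_right] at this
    exact e1 this
  rcases hx with hx | hx | hx | hx <;> rcases hy with hy | hy | hy | hy <;>
    first
    | exact absurd (hx.trans hy.symm) hxy
    | exact Or.inl (Or.inl ⟨hx, hy⟩)
    | exact Or.inl (Or.inr ⟨hx, hy⟩)
    | exact Or.inr (Or.inl (Or.inl ⟨hx, hy⟩))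
    | exact Or.inr (Or.inl (Or.inr ⟨hx, hy⟩))
    | skip
  · exact (A a b c d h1 h3 h2 h4 hcd (by simpa [hx, hy] using hF)).elim
  · exact (A a b d c h2 h4 h1 h3 hcd.symm (by simpa [hx, hy, swap_comm d c] using hF)).elim
  · exact (A b a c d h3 h1 h4 h2 hcd (by simpa [hx, hy, swap_comm b a] using hF)).elim
  · exact (A b a d c h4 h2 h3 h1 hcd.symm
      (by simpa [hx, hy, swap_comm d c, swap_comm b a] using hF)).elim
  · exact (A a b c d h1 h3 h2 h4 hcd (by simpa [hx, hy] using hF')).elim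
  · exact (A b a c d h3 h1 h4 h2 hcd (by simpa [hx, hy, swap_comm b a] using hF')).elim
  · exact (A a b d c h2 h4 h1 h3 hcd.symm (by simpa [hx, hy, swap_comm d c] using hF')).elim
  · exact (A b a d c h4 h2 h3 h1 hcd.symm
      (by simpa [hx, hy, swap_comm d c, swap_comm b a] using hF')).elim


lemma refT_inv (q X t) : (refT q X t) * refT q X t = 1 := by simp [refT]

lemma gne (q : ℕ → ℕ) (X : Finset ℕ) (t : ℕ) : stt q X t (q t) ≠ stt q X t (q t + 1) := by
  intro h
  have := (stt q X t).injective h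
  omega

lemma refT_four {q : ℕ → ℕ} {X : Finset ℕ} {a b c d : ℕ}
    (hne : refT q X a ≠ refT q X b) (h : refT q X a * refT q X b = refT q X c * refT q X d) :
    refT q X c = refT q X a ∨ refT q X c = refT q X b ∨
      refT q X c = refT q X a * refT q X b * refT q X a :=
  swap_four _ _ _ _ _ _ _ _ (gne _ _ _) (gne _ _ _) hne h

def LOrd (q : ℕ → ℕ) (X : Finset ℕ) (t u z : ℕ) : Prop := (stt q X t).symm u < (stt q X t).symm z

lemma ord_step {q : ℕ → ℕ} {X : Finset ℕ} {t u z : ℕ}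
    (h : ¬ (t ∈ X ∧ refT q X t = swap u z)) : LOrd q X (t+1) u z ↔ LOrd q X t u z := by
  unfold LOrd
  rw [stt_symm_succ, stt_symm_succ]
  split_ifs with ht
  · rw [swap_lt_iff]
    · rintro ⟨h1, h2⟩
      apply h
      refine ⟨ht, ?_⟩
      rw [refT, ← h2, ← h1]; simp
    · rintro ⟨h1, h2⟩
      apply h
      refine ⟨ht, ?_⟩
      rw [refT, ← h2, ← h1, swap_comm]; simp
  · rfl

lemma ord_flip {q : ℕ → ℕ} {X : Finset ℕ} {t u z : ℕ}
    (ht : t ∈ X) (h : refT q X t = swap u z) : LOrd q X (t+1) u z ↔ ¬ LOrd q X t u z := by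
  unfold LOrd
  rw [stt_symm_succ, stt_symm_succ, if_pos ht, if_pos ht]
  rcases swap_eq_cases (gne q X t) h with ⟨h1, h2⟩ | ⟨h1, h2⟩
  · rw [← h1, ← h2]; simp
  · rw [← h1, ← h2]; simp

lemma ord_const {q : ℕ → ℕ} {X : Finset ℕ} {s t u z : ℕ} (hst : s ≤ t)
    (h : ∀ p, s ≤ p → p < t → p ∈ X → refT q X p ≠ swap u z) :
    LOrd q X t u z ↔ LOrd q X s u z := by
  induction hst with
  | refl => rfl
  | @step m hm ih =>
    have hm' : s ≤ m := hm
    rw [ord_step, ih (fun p h1 h2 => h p h1 (by omega))]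
    rintro ⟨h1, h2⟩
    exact h m hm' (by omega) h1 h2

lemma ord_one {q : ℕ → ℕ} {X : Finset ℕ} (hR : Red q X) {s t u z p : ℕ} (hp : p ∈ X)
    (h : refT q X p = swap u z) (h1 : s ≤ p) (h2 : p < t) :
    LOrd q X t u z ↔ ¬ LOrd q X s u z := by
  rw [ord_const (s := p+1) (t := t) h2, ord_flip hp h, ord_const (s := s) (t := p) h1]
  · intro r r1 r2 r3 r4
    have := rf_inj hR r3 hp (r4.trans h.symm)
    omega
  · intro r r1 r2 r3 r4
    have := rf_inj hR r3 hp (r4.trans h.symm)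
    omega

lemma ord_adj {q : ℕ → ℕ} {X : Finset ℕ} {t x y z : ℕ} (h : refT q X t = swap x y)
    (hx : z ≠ x) (hy : z ≠ y) : LOrd q X t x z ↔ LOrd q X t y z := by
  unfold LOrd
  have e1 : (stt q X t).symm z ≠ (stt q X t).symm x := fun e => hx ((stt q X t).symm.injective e)
  have e2 : (stt q X t).symm z ≠ (stt q X t).symm y := fun e => hy ((stt q X t).symm.injective e)
  rcases swap_eq_cases (gne q X t) h with ⟨h1, h2⟩ | ⟨h1, h2⟩
  · have p1 : (stt q X t).symm x = q t := by rw [← h1]; simp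
    have p2 : (stt q X t).symm y = q t + 1 := by rw [← h2]; simp
    omega
  · have p1 : (stt q X t).symm y = q t := by rw [← h1]; simp
    have p2 : (stt q X t).symm x = q t + 1 := by rw [← h2]; simp
    omega

/-- the forbidden interlacing, labels version -/
lemma no_interlace_aux {q : ℕ → ℕ} {X : Finset ℕ} (hR : Red q X) {a b c d x y z : ℕ}
    (ha : refT q X a = swap x y) (hb : refT q X b = swap x y)
    (hx : z ≠ x) (hy : z ≠ y) (hab : a ≤ b)
    (hc : c ∈ X) (hd : d ∈ X) (hcz : refT q X c = swap x z) (hdz : refT q X d = swap y z)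
    (h1 : a ≤ c) (h2 : c < b) (h3 : d < a ∨ b ≤ d) : False := by
  have A := ord_adj ha hx hy
  have B := ord_adj hb hx hy
  have C := ord_one hR hc hcz h1 h2
  have D : LOrd q X b y z ↔ LOrd q X a y z := by
    apply ord_const hab
    intro p p1 p2 p3 p4
    have := rf_inj hR p3 hd (p4.trans hdz.symm)
    omega
  tauto

lemma no_interlace {q : ℕ → ℕ} {X : Finset ℕ} (hR : Red q X) {a b c d : ℕ}
    (hab : refT q X a = refT q X b) (hcd : refT q X c ≠ refT q X d)
    (hc : c ∈ X) (hd : d ∈ X)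
    (hconj : refT q X d = refT q X a * refT q X c * refT q X a) (hlt : a ≤ b)
    (h1 : a ≤ c) (h2 : c < b) (h3 : d < a ∨ b ≤ d) : False := by
  obtain ⟨x, y, hxy, hx⟩ : ∃ x y, x ≠ y ∧ refT q X a = swap x y := ⟨_, _, gne q X a, rfl⟩
  obtain ⟨l, h, hlh, hl⟩ : ∃ x y, x ≠ y ∧ refT q X c = swap x y := ⟨_, _, gne q X c, rfl⟩
  have hd' : refT q X d = swap (swap x y l) (swap x y h) := by
    rw [hconj, hx, hl, Equiv.swap_apply_apply]; simp
  have hb : refT q X b = swap x y := by rw [← hab, hx]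
  have go : ∀ x y l z, x ≠ y → l ≠ z → refT q X a = swap x y → refT q X b = swap x y →
      refT q X c = swap l z → refT q X d = swap (swap x y l) (swap x y z) → l = x → False := by
    intro x y l z hxy hlz hax hbx hcz hdz hlx
    subst hlx
    by_cases hzy : z = y
    · subst hzy
      rw [swap_apply_left, swap_apply_right, swap_comm] at hdz
      exact hcd (hcz.trans hdz.symm)
    · rw [swap_apply_left, swap_apply_of_ne_of_ne hlz.symm hzy] at hdz
      exact no_interlace_aux hR hax hbx hlz.symm hzy hlt hc hd hcz hdz h1 h2 h3
  by_cases e1 : l = x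
  · exact go x y l h hxy hlh hx hb hl hd' e1
  by_cases e2 : l = y
  · exact go y x l h hxy.symm hlh (by rw [hx, swap_comm]) (by rw [hb, swap_comm]) hl
      (by rw [hd', swap_comm x y]) e2
  by_cases e3 : h = x
  · exact go x y h l hxy hlh.symm hx hb (by rw [hl, swap_comm])
      (by rw [hd', swap_comm]) e3
  by_cases e4 : h = y
  · exact go y x h l hxy.symm hlh.symm (by rw [hx, swap_comm]) (by rw [hb, swap_comm])
      (by rw [hl, swap_comm]) (by rw [hd', swap_comm x y, swap_comm]) e4
  rw [swap_apply_of_ne_of_ne e1 e2, swap_apply_of_ne_of_ne e3 e4] at hd'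
  exact hcd (hl.trans hd'.symm)

lemma filt (N : ℕ) (P : ℕ → Prop) [DecidablePred P] (l : List ℕ) (hl : l.Pairwise (· < ·))
    (hm : ∀ p, p ∈ l ↔ p < N ∧ P p) : (List.range N).filter (fun p => P p) = l := by
  apply List.Perm.eq_of_pairwise (le := (· < ·))
  · intro a b _ _ h1 h2; omega
  · exact List.Pairwise.filter _ List.pairwise_lt_range
  · exact hl
  · apply (List.perm_ext_iff_of_nodup _ _).2
    · intro p; simp [hm]
    · exact List.Nodup.filter _ List.nodup_range
    · exact hl.imp (fun h => Nat.ne_of_lt h)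

lemma compare_list {q : ℕ → ℕ} {X Y : Finset ℕ} {N : ℕ} (l : List ℕ) (hl : l.Pairwise (· < ·))
    (hm : ∀ p, p ∈ l ↔ p < N ∧ ¬ (p ∈ X ↔ p ∈ Y)) (h : stt q Y N = stt q X N) :
    (l.map (refT q X)).prod = 1 := by
  have := stt_compare q X Y N
  rw [filt N _ l hl hm, h] at this
  simpa using this


def IsSw (s : Perm ℕ) : Prop := ∃ x y, x ≠ y ∧ s = swap x y
def R3 (s1 s2 r : Perm ℕ) : Prop := r = s1 ∨ r = s2 ∨ r = s1 * s2 * s1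

lemma IsSw.inv {s : Perm ℕ} (h : IsSw s) : s⁻¹ = s := by
  obtain ⟨x, y, _, rfl⟩ := h; simp
lemma IsSw.sq {s : Perm ℕ} (h : IsSw s) : s * s = 1 := by
  obtain ⟨x, y, _, rfl⟩ := h; simp
lemma IsSw.conj {s r : Perm ℕ} (h : IsSw s) (hr : IsSw r) : IsSw (r * s * r) := by
  obtain ⟨x, y, hxy, rfl⟩ := h
  refine ⟨r x, r y, fun e => hxy (r.injective e), ?_⟩
  rw [Equiv.swap_apply_apply, hr.inv]
lemma isSw_refT (q : ℕ → ℕ) (X : Finset ℕ) (t : ℕ) : IsSw (refT q X t) := ⟨_, _, gne q X t, rfl⟩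

lemma four_l {s1 s2 s3 s4 : Perm ℕ} (h1 : IsSw s1) (h2 : IsSw s2) (h3 : IsSw s3) (h4 : IsSw s4)
    (hne : s1 ≠ s2) (h : s1 * s2 = s3 * s4) : R3 s1 s2 s3 := by
  obtain ⟨a, b, hab, rfl⟩ := h1
  obtain ⟨c, d, hcd, rfl⟩ := h2
  obtain ⟨x, y, hxy, rfl⟩ := h3
  obtain ⟨u, v, huv, rfl⟩ := h4
  exact swap_four a b c d x y u v hcd hxy hne h

lemma four_r {s1 s2 s3 s4 : Perm ℕ} (h1 : IsSw s1) (h2 : IsSw s2) (h3 : IsSw s3) (h4 : IsSw s4)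
    (hne : s1 ≠ s2) (h : s1 * s2 = s3 * s4) : R3 s1 s2 s4 := by
  apply four_l h1 h2 h4 (h3.conj h4) hne
  rw [h, ← mul_assoc, ← mul_assoc, h4.sq, one_mul]

lemma four_inter {s1 s2 s3 s4 : Perm ℕ} (h1 : IsSw s1) (h2 : IsSw s2) (h3 : IsSw s3)
    (h4 : IsSw s4)
    (hne : s1 ≠ s2) (h : s1 * s3 * s2 * s4 = 1) : R3 s1 s2 s3 ∧ R3 s1 s2 s4 := by
  have e : s1 * s2 = (s1 * s3 * s1) * s4 := by
    have h' : s1 * s3 * s2 = s4 := by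
      rw [← h4.inv]; exact mul_eq_one_iff_eq_inv.mp h
    have h3' : s3 * s2 = s1 * s4 := by
      rw [← h', ← mul_assoc, ← mul_assoc, h1.sq, one_mul]
    have h2' : s2 = s3 * (s1 * s4) := by
      rw [← h3', ← mul_assoc, h3.sq, one_mul]
    rw [h2']; simp only [mul_assoc]
  refine ⟨?_, four_r h1 h2 (h3.conj h1) h4 hne e⟩
  have key : s3 = s1 * (s1 * s3 * s1) * s1 := by
    simp only [mul_assoc, h1.sq, mul_one]
    rw [← mul_assoc, h1.sq, one_mul]
  have sq' : ∀ r, s1 * (s1 * r) = r := fun r => by rw [← mul_assoc, h1.sq, one_mul]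
  rcases four_l h1 h2 (h3.conj h1) h4 hne e with h | h | h
  · left; rw [key, h, h1.sq, one_mul]
  · right; right; rw [key, h]
  · right; left; rw [key, h]; simp only [mul_assoc, h1.sq, mul_one, sq']

def Good (q : ℕ → ℕ) (N : ℕ) (w : Perm ℕ) (Q A : Finset ℕ) : Prop :=
  A ⊆ Q ∧ Red q (Q \ A) ∧ stt q (Q \ A) N = w

lemma good_shared {q : ℕ → ℕ} {N : ℕ} {w : Perm ℕ} {Q : Finset ℕ} (hQ : ∀ t ∈ Q, t < N)
    {a b c : ℕ} (hab : a ≠ b) (hac : a ≠ c) (hbc : b ≠ c)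
    (h1 : Good q N w Q {a, b}) (h2 : Good q N w Q {a, c}) :
    refT q (Q \ {a, b}) c = refT q (Q \ {a, b}) b := by
  have hb : b ∈ Q := h1.1 (by simp)
  have hc : c ∈ Q := h2.1 (by simp)
  have e : stt q (Q \ {a, c}) N = stt q (Q \ {a, b}) N := h2.2.2.trans h1.2.2.symm
  have hmem : ∀ p, (p = b ∨ p = c) ↔ p < N ∧ ¬ (p ∈ Q \ {a, b} ↔ p ∈ Q \ {a, c}) := by
    intro p
    have := hQ b hb
    have := hQ c hc
    simp only [Finset.mem_sdiff, Finset.mem_insert, Finset.mem_singleton]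
    grind
  rcases lt_or_gt_of_ne hbc with h | h
  · have := compare_list [b, c] (by simp [h]) (by intro p; rw [← hmem]; simp) e
    simp only [List.map_cons, List.map_nil, List.prod_cons, List.prod_nil, mul_one] at this
    have := mul_eq_one_iff_eq_inv.mp this
    rw [(isSw_refT _ _ _).inv] at this
    exact this.symm
  · have := compare_list [c, b] (by simp [h]) (by
        intro p; rw [← hmem]; simp only [List.mem_cons, List.not_mem_nil, or_false]
        clear * -; tauto) e
    simp only [List.map_cons, List.map_nil, List.prod_cons, List.prod_nil, mul_one] at this
    have := mul_eq_one_iff_eq_inv.mp this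
    rw [(isSw_refT _ _ _).inv] at this
    exact this

lemma good_disj_aux {q : ℕ → ℕ} {N : ℕ} {w : Perm ℕ} {Q : Finset ℕ} (hQ : ∀ t ∈ Q, t < N)
    {a b c d : ℕ} (hab : a < b) (hcd : c < d) (hac : a ≠ c) (had : a ≠ d) (hbc : b ≠ c)
    (hbd : b ≠ d)
    (h1 : Good q N w Q {a, b}) (h2 : Good q N w Q {c, d}) :
    R3 (refT q (Q \ {a, b}) a) (refT q (Q \ {a, b}) b) (refT q (Q \ {a, b}) c) ∧
    R3 (refT q (Q \ {a, b}) a) (refT q (Q \ {a, b}) b) (refT q (Q \ {a, b}) d) := by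
  have ha : a ∈ Q := h1.1 (by simp)
  have hb : b ∈ Q := h1.1 (by simp)
  have hc : c ∈ Q := h2.1 (by simp)
  have hd : d ∈ Q := h2.1 (by simp)
  have e : stt q (Q \ {c, d}) N = stt q (Q \ {a, b}) N := h2.2.2.trans h1.2.2.symm
  have hmem : ∀ p, (p = a ∨ p = b ∨ p = c ∨ p = d) ↔
      p < N ∧ ¬ (p ∈ Q \ {a, b} ↔ p ∈ Q \ {c, d}) := by
    intro p
    have := hQ a ha
    have := hQ b hb
    have := hQ c hc
    have := hQ d hd
    simp only [Finset.mem_sdiff, Finset.mem_insert, Finset.mem_singleton]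
    grind
  have hcX : c ∈ Q \ {a, b} := by simp [hc, hac.symm, hbc.symm]
  have hdX : d ∈ Q \ {a, b} := by simp [hd, had.symm, hbd.symm]
  have hR := h1.2.1
  generalize hX : Q \ {a, b} = X at *
  have hne : refT q X c ≠ refT q X d := fun h => hcd.ne (rf_inj hR hcX hdX h)
  have sa := isSw_refT q X a
  have sb := isSw_refT q X b
  have sc := isSw_refT q X c
  have sd := isSw_refT q X d
  have cl := fun l h1 h2 => compare_list (q := q) (N := N) (X := X) (Y := Q \ {c, d}) l h1 h2 e
  have T1 : refT q X a * refT q X b = refT q X c * refT q X d →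
    R3 (refT q X a) (refT q X b) (refT q X c) ∧ R3 (refT q X a) (refT q X b) (refT q X d) := by
    intro h
    have hne' : refT q X a ≠ refT q X b := by
      intro h'
      rw [h', sb.sq] at h
      have := mul_eq_one_iff_eq_inv.mp h.symm
      rw [sd.inv] at this
      exact hne this
    exact ⟨four_l sa sb sc sd hne' h, four_r sa sb sc sd hne' h⟩
  have T2 : refT q X a * refT q X b = refT q X d * refT q X c →
    R3 (refT q X a) (refT q X b) (refT q X c) ∧ R3 (refT q X a) (refT q X b) (refT q X d) := by
    intro h
    have hne' : refT q X a ≠ refT q X b := by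
      intro h'
      rw [h', sb.sq] at h
      have := mul_eq_one_iff_eq_inv.mp h.symm
      rw [sc.inv] at this
      exact hne this.symm
    exact ⟨four_r sa sb sd sc hne' h, four_l sa sb sd sc hne' h⟩
  have cyc : ∀ {u v : Perm ℕ}, u * v = 1 → v * u = 1 := fun h => mul_eq_one_comm.mp h
  have inv2 : ∀ {u v r s : Perm ℕ}, IsSw r → IsSw s → u * v * (r * s) = 1 → u * v = s * r := by
    intro u v r s hr hs h
    have := mul_eq_one_iff_eq_inv.mp h
    rwa [mul_inv_rev, hr.inv, hs.inv] at this
  by_cases o1 : b < c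
  · -- a b c d
    have := cl [a, b, c, d] (by simp; omega) (by intro p; rw [← hmem]; simp)
    simp only [List.map_cons, List.map_nil, List.prod_cons, List.prod_nil, mul_one] at this
    exact T2 (inv2 sc sd (by rw [← this]; simp only [mul_assoc]))
  by_cases o2 : d < a
  · have := cl [c, d, a, b] (by simp; omega) (by
        intro p; rw [← hmem]; simp only [List.mem_cons, List.not_mem_nil, or_false]
        clear * -; tauto)
    simp only [List.map_cons, List.map_nil, List.prod_cons, List.prod_nil, mul_one] at this
    apply T2
    apply inv2 sc sd
    apply cyc
    rw [← this]; simp only [mul_assoc]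
  by_cases o3 : c < a
  · by_cases o4 : d < b
    · -- c a d b
      have := cl [c, a, d, b] (by simp; omega) (by
        intro p; rw [← hmem]; simp only [List.mem_cons, List.not_mem_nil, or_false]
        clear * -; tauto)
      simp only [List.map_cons, List.map_nil, List.prod_cons, List.prod_nil, mul_one] at this
      have h' := cyc this
      by_cases hne' : refT q X a = refT q X b
      · exfalso
        refine no_interlace hR hne' hne.symm hdX hcX ?_ hab.le (by omega) (by omega)
          (Or.inl o3)
        have := mul_eq_one_iff_eq_inv.mp this
        rw [this, mul_inv_rev, mul_inv_rev, sa.inv, sb.inv, sd.inv, hne']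
      · exact (four_inter sa sb sd sc hne' (by rw [← h']; simp only [mul_assoc])).symm
    · -- c a b d
      have := cl [c, a, b, d] (by simp; omega) (by
        intro p; rw [← hmem]; simp only [List.mem_cons, List.not_mem_nil, or_false]
        clear * -; tauto)
      simp only [List.map_cons, List.map_nil, List.prod_cons, List.prod_nil, mul_one] at this
      apply T1
      apply inv2 sd sc
      have h' := cyc this
      rw [← h']; simp only [mul_assoc]
  · by_cases o4 : d < b
    · -- a c d b
      have := cl [a, c, d, b] (by simp; omega) (by
        intro p; rw [← hmem]; simp only [List.mem_cons, List.not_mem_nil, or_false]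
        clear * -; tauto)
      simp only [List.map_cons, List.map_nil, List.prod_cons, List.prod_nil, mul_one] at this
      apply T1
      symm
      apply inv2 sb sa
      have h' := cyc this
      rw [← h']; simp only [mul_assoc]
    · -- a c b d
      have := cl [a, c, b, d] (by simp; omega) (by
        intro p; rw [← hmem]; simp only [List.mem_cons, List.not_mem_nil, or_false]
        clear * -; tauto)
      simp only [List.map_cons, List.map_nil, List.prod_cons, List.prod_nil, mul_one] at this
      have h' : refT q X a * refT q X c * refT q X b * refT q X d = 1 := by
        rw [← this]; simp only [mul_assoc]
      by_cases hne' : refT q X a = refT q X b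
      · exfalso
        refine no_interlace hR hne' hne hcX hdX ?_ hab.le (by omega) (by omega)
          (Or.inr (by omega))
        have := mul_eq_one_iff_eq_inv.mp h'
        rw [sd.inv] at this
        rw [← this, hne']
      · exact four_inter sa sb sc sd hne' h'


lemma pair_of_mem {A : Finset ℕ} (hA : A.card = 2) {v : ℕ} (hv : v ∈ A) :
    ∃ d, v ≠ d ∧ A = {v, d} := by
  obtain ⟨x, y, hxy, rfl⟩ := Finset.card_eq_two.mp hA
  simp only [Finset.mem_insert, Finset.mem_singleton] at hv
  rcases hv with rfl | rfl
  · exact ⟨y, hxy, rfl⟩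
  · exact ⟨x, hxy.symm, Finset.pair_comm _ _⟩

lemma deg_le_two {q : ℕ → ℕ} {N : ℕ} {w : Perm ℕ} {Q : Finset ℕ} (hQ : ∀ t ∈ Q, t < N)
    (F : Finset (Finset ℕ)) (hF : ∀ A ∈ F, A.card = 2 ∧ Good q N w Q A) (v : ℕ) :
    (F.filter (fun A => v ∈ A)).card ≤ 2 := by
  by_contra hc
  push Not at hc
  obtain ⟨A1, m1, A2, m2, A3, m3, n12, n13, n23⟩ := Finset.two_lt_card.mp hc
  simp only [Finset.mem_filter] at m1 m2 m3
  obtain ⟨d1, e1, rfl⟩ := pair_of_mem (hF _ m1.1).1 m1.2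
  obtain ⟨d2, e2, rfl⟩ := pair_of_mem (hF _ m2.1).1 m2.2
  obtain ⟨d3, e3, rfl⟩ := pair_of_mem (hF _ m3.1).1 m3.2
  have g1 := (hF _ m1.1).2
  have g2 := (hF _ m2.1).2
  have g3 := (hF _ m3.1).2
  have k12 : d1 ≠ d2 := by rintro rfl; exact n12 rfl
  have k13 : d1 ≠ d3 := by rintro rfl; exact n13 rfl
  have k23 : d2 ≠ d3 := by rintro rfl; exact n23 rfl
  have r2 := good_shared hQ e1 e2 k12 g1 g2
  have r3 := good_shared hQ e1 e3 k13 g1 g3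
  refine k23 (rf_inj g1.2.1 ?_ ?_ (r2.trans r3.symm))
  · have : d2 ∈ Q := g2.1 (by simp)
    simp [this, e2.symm, k12.symm]
  · have : d3 ∈ Q := g3.1 (by simp)
    simp [this, e3.symm, k13.symm]

theorem five {q : ℕ → ℕ} {N : ℕ} {w : Perm ℕ} {Q : Finset ℕ} (hQ : ∀ t ∈ Q, t < N)
    (F : Finset (Finset ℕ)) (hF : ∀ A ∈ F, A.card = 2 ∧ Good q N w Q A) : F.card ≤ 5 := by
  classical
  rcases F.eq_empty_or_nonempty with rfl | ⟨A, hA⟩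
  · simp
  obtain ⟨a, b, hab, rfl⟩ : ∃ a b, a < b ∧ A = {a, b} := by
    obtain ⟨x, y, hxy, rfl⟩ := Finset.card_eq_two.mp (hF A hA).1
    rcases lt_or_gt_of_ne hxy with h | h
    · exact ⟨x, y, h, rfl⟩
    · exact ⟨y, x, h, Finset.pair_comm _ _⟩
  have gA := (hF _ hA).2
  set V := F.biUnion id with hV
  have hVV : ∀ A ∈ F, ∀ v ∈ A, v ∈ V := by
    intro A hA v hv
    rw [hV]; simp only [Finset.mem_biUnion]; exact ⟨A, hA, hv⟩
  have hV' : (V \ {a, b}).card ≤ 3 := by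
    set s1 := refT q (Q \ {a, b}) a with hs1
    set s2 := refT q (Q \ {a, b}) b with hs2
    have hX : ∀ c ∈ V \ {a, b}, c ∈ Q \ {a, b} := by
      intro c hc
      simp only [Finset.mem_sdiff, hV, Finset.mem_biUnion] at hc ⊢
      obtain ⟨⟨B, hB, hcB⟩, hc2⟩ := hc
      exact ⟨(hF B hB).2.1 hcB, hc2⟩
    refine (Finset.card_le_card_of_injOn (t := {s1, s2, s1 * s2 * s1})
      (refT q (Q \ {a, b})) ?_ ?_).trans Finset.card_le_three
    · intro c hc
      have hc0 := hc
      simp only [Finset.coe_sdiff, Finset.coe_insert, Finset.coe_singleton, Set.mem_sdiff,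
        Finset.mem_coe, hV, Finset.mem_biUnion, Set.mem_insert_iff, Set.mem_singleton_iff] at hc
      obtain ⟨⟨B, hB, hcB⟩, hc2⟩ := hc
      push Not at hc2
      obtain ⟨d, hcd, rfl⟩ := pair_of_mem (hF B hB).1 hcB
      have gB := (hF _ hB).2
      have goal : R3 s1 s2 (refT q (Q \ {a, b}) c) := by
        by_cases hda : d = a
        · subst hda
          right; left
          rw [Finset.pair_comm] at gB
          exact good_shared hQ hab.ne hc2.1.symm hc2.2.symm gA gB
        by_cases hdb : d = b
        · subst hdb
          left
          rw [hs1, Finset.pair_comm a d] at *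
          rw [Finset.pair_comm] at gB
          exact good_shared hQ hab.ne' hc2.2.symm hc2.1.symm gA gB
        rcases lt_or_gt_of_ne hcd with h | h
        · exact (good_disj_aux hQ hab h hc2.1.symm (Ne.symm hda) hc2.2.symm (Ne.symm hdb) gA gB).1
        · rw [Finset.pair_comm] at gB
          exact (good_disj_aux hQ hab h (Ne.symm hda) hc2.1.symm (Ne.symm hdb) hc2.2.symm gA gB).2
      simpa [R3] using goal
    · intro c hc d hd h
      exact rf_inj gA.2.1 (hX c hc) (hX d hd) h
  have hVc : V.card ≤ 5 := by
    have h1 : V.card ≤ (V \ {a, b}).card + ({a, b} : Finset ℕ).card := by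
      have := Finset.le_card_sdiff ({a, b} : Finset ℕ) V
      omega
    have : ({a, b} : Finset ℕ).card ≤ 2 := Finset.card_le_two
    omega
  have dc := Finset.sum_card_bipartiteAbove_eq_sum_card_bipartiteBelow
    (s := F) (t := V) (fun (A : Finset ℕ) (v : ℕ) => v ∈ A)
  have l : ∑ A ∈ F, (V.bipartiteAbove (fun (A : Finset ℕ) (v : ℕ) => v ∈ A) A).card
      = ∑ A ∈ F, 2 := by
    apply Finset.sum_congr rfl
    intro B hB
    rw [← (hF B hB).1]
    congr 1
    ext v
    simp only [Finset.bipartiteAbove, Finset.mem_filter]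
    exact ⟨fun h => h.2, fun h => ⟨hVV B hB v h, h⟩⟩
  have r : ∑ v ∈ V, (F.bipartiteBelow (fun (A : Finset ℕ) (v : ℕ) => v ∈ A) v).card
      ≤ ∑ v ∈ V, 2 := by
    apply Finset.sum_le_sum
    intro v _
    exact deg_le_two hQ F hF v
  rw [← dc, l] at r
  simp at r
  omega


open Classical in
noncomputable def dem (n : ℕ) (S : ℕ → ℕ → Prop) : ℕ → Perm ℕ
  | 0 => 1
  | t+1 =>
    if t / n < t % n ∧ ¬ S (t / n) (t % n) ∧
        dem n S t (t % n - t / n - 1) < dem n S t (t % n - t / n - 1 + 1) then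
      dem n S t * swap (t % n - t / n - 1) (t % n - t / n - 1 + 1)
    else dem n S t

def cnt (n p : ℕ) (g : Perm ℕ) (y : ℕ) : ℕ := ((Finset.Ico y n).filter (fun x => p ≤ g x)).card

lemma cnt_end (n p : ℕ) (g : Perm ℕ) : cnt n p g n = 0 := by simp [cnt]

lemma cnt_rec {n y : ℕ} (p : ℕ) (g : Perm ℕ) (h : y < n) :
    cnt n p g y = cnt n p g (y+1) + if p ≤ g y then 1 else 0 := by
  unfold cnt
  rw [← Finset.insert_Ico_add_one_left_eq_Ico h, Finset.filter_insert]
  split_ifs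
  · rw [Finset.card_insert_of_notMem]; simp
  · simp

lemma cnt_one {n p y : ℕ} (hy : y ≤ n) (hp : p ≤ n) : cnt n p 1 y = n - max y p := by
  unfold cnt
  have : (Finset.Ico y n).filter (fun x => p ≤ (1 : Perm ℕ) x) = Finset.Ico (max y p) n := by
    ext x; rw [Finset.mem_filter, Finset.mem_Ico, Finset.mem_Ico, Perm.one_apply]; omega
  rw [this]; simp

lemma cnt_swap_gt {n p z y : ℕ} (g : Perm ℕ) (h : z + 1 < y) :
    cnt n p (g * swap z (z+1)) y = cnt n p g y := by
  unfold cnt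
  congr 1
  apply Finset.filter_congr
  intro x hx
  simp only [Finset.mem_Ico] at hx
  rw [Perm.mul_apply, swap_apply_of_ne_of_ne (by omega) (by omega)]

lemma cnt_swap_mid {n p z : ℕ} (g : Perm ℕ) (h : z + 1 < n) :
    cnt n p (g * swap z (z+1)) (z+1) = cnt n p g (z+2) + if p ≤ g z then 1 else 0 := by
  rw [cnt_rec _ _ h, cnt_swap_gt _ (by omega)]
  simp

lemma cnt_swap_le {n p z y : ℕ} (g : Perm ℕ) (h : z + 1 < n) (hy : y ≤ z) :
    cnt n p (g * swap z (z+1)) y = cnt n p g y := by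
  induction hy using Nat.decreasingInduction with
  | self =>
    rw [cnt_rec _ _ (by omega), cnt_swap_mid _ h, cnt_rec p g (by omega : z < n), cnt_rec p g h]
    simp only [Perm.mul_apply, swap_apply_left, show z + 1 + 1 = z + 2 from rfl]; omega
  | of_succ y hy ih =>
    rw [cnt_rec _ _ (by omega), ih, cnt_rec p g (by omega : y < n), Perm.mul_apply,
      swap_apply_of_ne_of_ne (by omega) (by omega)]

open Classical in
lemma dem_cell {n a b : ℕ} (S : ℕ → ℕ → Prop) (hb : b < n) :
    dem n S (a*n+b+1) =
      if a < b ∧ ¬ S a b ∧ dem n S (a*n+b) (b - a - 1) < dem n S (a*n+b) (b - a - 1 + 1) then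
      dem n S (a*n+b) * swap (b-a-1) (b-a-1+1) else dem n S (a*n+b) := by
  have h1 : (a*n+b)/n = a := by
    rw [mul_comm, Nat.mul_add_div (by omega), Nat.div_eq_of_lt hb, add_zero]
  have h2 : (a*n+b)%n = b := by
    rw [mul_comm, Nat.mul_add_mod, Nat.mod_eq_of_lt hb]
  rw [dem, h1, h2]

lemma dem_cnt_ne {n a b p y : ℕ} (S : ℕ → ℕ → Prop) (hb : b < n) (hy : a < b → y ≠ b - a) :
    cnt n p (dem n S (a*n+b+1)) y = cnt n p (dem n S (a*n+b)) y := by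
  rw [dem_cell S hb]
  split_ifs with h
  · have := hy h.1
    rcases lt_or_ge (b-a-1+1) y with h' | h'
    · exact cnt_swap_gt _ h'
    · exact cnt_swap_le _ (by omega) (by omega)
  · rfl

lemma dem_cnt_elbow {n a b p y : ℕ} (S : ℕ → ℕ → Prop) (hb : b < n) (hS : S a b) :
    cnt n p (dem n S (a*n+b+1)) y = cnt n p (dem n S (a*n+b)) y := by
  rw [dem_cell S hb, if_neg (by tauto)]

lemma dem_cnt_cross {n a b p : ℕ} (S : ℕ → ℕ → Prop) (hb : b < n) (hab : a < b) (hS : ¬ S a b) :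
    cnt n p (dem n S (a*n+b+1)) (b-a) =
      max (cnt n p (dem n S (a*n+b)) (b+1-a)) (cnt n p (dem n S (a*n+b)) (b-a-1) - 1) := by
  rw [dem_cell S hb]
  obtain ⟨z, hz⟩ : ∃ z, b - a = z + 1 := ⟨b-a-1, by omega⟩
  have e1 : b + 1 - a = z + 2 := by omega
  rw [e1, hz]
  set g := dem n S (a*n+b)
  simp only [Nat.add_sub_cancel]
  have r1 := cnt_rec p g (by omega : z < n)
  have r2 := cnt_rec p g (by omega : z + 1 < n)
  simp only [show z + 1 + 1 = z + 2 from rfl] at r2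
  split_ifs with h
  · rw [cnt_swap_mid _ (by omega), r1, r2]
    have := h.2.2
    simp only [Nat.add_sub_cancel] at this
    split_ifs <;> omega
  · have : ¬ g z < g (z+1) := by tauto
    rw [r1, r2]
    split_ifs <;> omega

open Classical in
noncomputable def LL (S : ℕ → ℕ → Prop) (p : ℕ) : ℕ → ℕ → ℕ
  | 0, _ => 0
  | _+1, 0 => 0
  | a+1, b+1 => if b < p then 0 else
      max (max (LL S p a (b+1)) (LL S p (a+1) b)) (if S a b then LL S p a b + 1 else 0)

lemma LL_zero (S : ℕ → ℕ → Prop) (p a b : ℕ) (h : b ≤ p) : LL S p a b = 0 := by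
  cases a with
  | zero => simp [LL]
  | succ a =>
    cases b with
    | zero => simp [LL]
    | succ b => rw [LL, if_pos (by omega)]

lemma LL_mono_a (S : ℕ → ℕ → Prop) (p a b : ℕ) : LL S p a b ≤ LL S p (a+1) b := by
  cases b with
  | zero => rw [LL_zero S p a 0 (by omega)]; omega
  | succ b =>
    by_cases h : b < p
    · rw [LL_zero S p a _ (by omega)]; omega
    · rw [LL, if_neg h]; omega

lemma LL_mono_b (S : ℕ → ℕ → Prop) (p a b : ℕ) : LL S p a b ≤ LL S p a (b+1) := by
  cases a with
  | zero => simp [LL]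
  | succ a =>
    by_cases h : b < p
    · rw [LL_zero S p _ b (by omega)]; omega
    · rw [LL, if_neg h]; omega

lemma LL_lip_a (S : ℕ → ℕ → Prop) (p a b : ℕ) : LL S p (a+1) b ≤ LL S p a b + 1 := by
  induction b with
  | zero => rw [LL_zero S p _ 0 (by omega)]; omega
  | succ b ih =>
    by_cases h : b < p
    · rw [LL_zero S p _ _ (by omega)]; omega
    · rw [LL, if_neg h]
      have := LL_mono_b S p a b
      split_ifs <;> omega

lemma LL_lip_b (S : ℕ → ℕ → Prop) (p a b : ℕ) : LL S p a (b+1) ≤ LL S p a b + 1 := by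
  induction a with
  | zero => simp [LL]
  | succ a ih =>
    by_cases h : b < p
    · rw [LL_zero S p _ _ (by omega)]; omega
    · rw [LL, if_neg h]
      have := LL_mono_a S p a b
      split_ifs <;> omega

lemma growth_row {n p a : ℕ} (S : ℕ → ℕ → Prop) (hp : p ≤ n) (ha : a < p)
    (h0 : ∀ b', a ≤ b' → b' ≤ n → cnt n p (dem n S (a*n)) (b'-a) = LL S p a b' + n - max b' p)
    (b : ℕ) (hb : b ≤ n) :
    (∀ b', a ≤ b' → b ≤ b' → b' ≤ n →
      cnt n p (dem n S (a*n+b)) (b'-a) = LL S p a b' + n - max b' p) ∧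
    (∀ b', a + 1 ≤ b' → b' ≤ b →
      cnt n p (dem n S (a*n+b)) (b'-a-1) = LL S p (a+1) b' + n - max b' p) := by
  induction b with
  | zero => exact ⟨fun b' h1 _ h2 => h0 b' h1 h2, fun b' h1 h2 => by omega⟩
  | succ b ih =>
    obtain ⟨i1, i2⟩ := ih (by omega)
    rw [← add_assoc]
    refine ⟨fun b' h1 h2 h3 => ?_, fun b' h1 h2 => ?_⟩
    · rw [dem_cnt_ne S (by omega) (by omega)]
      exact i1 b' h1 (by omega) h3
    · rcases Nat.lt_or_ge b' (b+1) with h3 | h3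
      · rw [dem_cnt_ne S (by omega) (by omega)]
        exact i2 b' h1 (by omega)
      have hb' : b' = b + 1 := by omega
      subst hb'
      rcases Nat.eq_or_lt_of_le (by omega : a ≤ b) with h4 | h4
      · subst h4
        rw [dem_cnt_ne S (by omega) (by omega)]
        have := i1 a le_rfl le_rfl (by omega)
        rw [LL_zero S p _ _ (by omega)] at this
        rw [LL_zero S p _ _ (by omega), show a + 1 - a - 1 = a - a by omega, this]
        omega
      · have j1 := i1 b (by omega) le_rfl (by omega)
        have j2 := i1 (b+1) (by omega) (by omega) (by omega)
        have j3 := i2 b (by omega) (by omega)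
        have l1 := LL_lip_a S p a b
        have l2 := LL_lip_b S p a b
        rw [show b + 1 - a - 1 = b - a by omega]
        by_cases hS : S a b
        · rw [dem_cnt_elbow S (by omega) hS, j1, LL]
          by_cases hbp : b < p
          · rw [LL_zero S p _ _ (by omega), if_pos hbp]; omega
          · rw [if_neg hbp, if_pos hS]; omega
        · rw [dem_cnt_cross S (by omega) h4 hS, j2, j3, LL]
          by_cases hbp : b < p
          · rw [LL_zero S p _ _ (by omega), LL_zero S p _ _ (by omega), if_pos hbp]; omega
          · rw [if_neg hbp, if_neg hS]; omega

lemma growth {n p : ℕ} (S : ℕ → ℕ → Prop) (hp : p ≤ n) (a : ℕ) (ha : a ≤ p) :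
    ∀ b', a ≤ b' → b' ≤ n → cnt n p (dem n S (a*n)) (b'-a) = LL S p a b' + n - max b' p := by
  induction a with
  | zero =>
    intro b' _ h
    simp only [zero_mul, dem, LL]
    rw [Nat.sub_zero, cnt_one h hp]; omega
  | succ a ih =>
    intro b' h1 h2
    have := (growth_row S hp (by omega) (ih (by omega)) n le_rfl).2 b' h1 h2
    rw [show (a+1)*n = a*n+n by ring, ← this]
    rfl

lemma growth_late {n p : ℕ} (S : ℕ → ℕ → Prop) (t : ℕ) (ht : p*n ≤ t) :
    cnt n p (dem n S t) (n-p) = cnt n p (dem n S (p*n)) (n-p) := by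
  induction t, ht using Nat.le_induction with
  | base => rfl
  | succ t ht ih =>
    rw [← ih]
    rcases Nat.eq_zero_or_pos n with rfl | hn
    · simp [cnt]
    have e : t = (t/n)*n + t%n := (Nat.div_add_mod' t n).symm
    have hlt := Nat.mod_lt t hn
    have hp : p ≤ t / n := (Nat.le_div_iff_mul_le hn).mpr ht
    rw [e]
    exact dem_cnt_ne S hlt (by omega)

lemma growth_final {n p : ℕ} (S : ℕ → ℕ → Prop) (hp : p ≤ n) :
    cnt n p (dem n S (n*n)) (n-p) = LL S p p n := by
  rw [growth_late S _ (Nat.mul_le_mul_right n hp), growth S hp p le_rfl n hp le_rfl]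
  omega


def XC (C : Finset (ℕ × ℕ)) : Prop :=
  ∀ e ∈ C, ∀ f ∈ C, e ≠ f → (e.1 < f.1 ∧ f.1 < e.2 ∧ e.2 < f.2) ∨
    (f.1 < e.1 ∧ e.1 < f.2 ∧ f.2 < e.2)

def CF (k : ℕ) (S : ℕ → ℕ → Prop) : Prop :=
  ∀ C : Finset (ℕ × ℕ), XC C → (∀ e ∈ C, S e.1 e.2) → C.card ≤ k

lemma XC_mono {C D : Finset (ℕ × ℕ)} (h : XC D) (hs : C ⊆ D) : XC C :=
  fun e he f hf hne => h e (hs he) f (hs hf) hne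

lemma LL_upper (S : ℕ → ℕ → Prop) (p a b : ℕ) (C : Finset (ℕ × ℕ)) (hC : XC C)
    (hS : ∀ e ∈ C, S e.1 e.2) (hr : ∀ e ∈ C, e.1 < a ∧ p ≤ e.2 ∧ e.2 < b) :
    C.card ≤ LL S p a b := by
  induction a generalizing b C with
  | zero =>
    have : C = ∅ := Finset.eq_empty_of_forall_notMem fun e he => by have := hr e he; omega
    simp [this]
  | succ a iha =>
    induction b generalizing C with
    | zero =>
      have : C = ∅ := Finset.eq_empty_of_forall_notMem fun e he => by have := hr e he; omega
      simp [this]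
    | succ b ihb =>
      by_cases hbp : b < p
      · have : C = ∅ := Finset.eq_empty_of_forall_notMem fun e he => by have := hr e he; omega
        simp [this]
      rw [LL, if_neg hbp]
      by_cases hm : (a, b) ∈ C
      · rw [if_pos (hS _ hm)]
        have h1 := Finset.card_erase_add_one hm
        have h2 := iha b (C.erase (a, b)) (XC_mono hC (Finset.erase_subset _ _))
          (fun e he => hS e (Finset.mem_of_mem_erase he)) (by
            intro e he
            have h3 := Finset.mem_of_mem_erase he
            have h4 := hC e h3 (a, b) hm (Finset.ne_of_mem_erase he)
            have h5 := hr e h3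
            simp only at h4
            omega)
        omega
      · by_cases hA : ∀ e ∈ C, e.1 < a
        · have := iha (b+1) C hC hS (fun e he => ⟨hA e he, (hr e he).2⟩)
          omega
        · have : ∀ e ∈ C, e.2 < b := by
            by_contra hB
            push Not at hA hB
            obtain ⟨e, he, h1⟩ := hA
            obtain ⟨f, hf, h2⟩ := hB
            have r1 := hr e he
            have r2 := hr f hf
            by_cases hef : e = f
            · subst hef
              apply hm
              have : e = (a, b) := Prod.ext (by simp; omega) (by simp; omega)
              rwa [← this]
            · have := hC e he f hf hef
              omega
          have := ihb C hC hS (fun e he => ⟨(hr e he).1, (hr e he).2.1, this e he⟩)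
          omega

lemma LL_lower (S : ℕ → ℕ → Prop) (p a b : ℕ) (hap : a ≤ p) :
    ∃ C : Finset (ℕ × ℕ), XC C ∧ (∀ e ∈ C, S e.1 e.2) ∧
      (∀ e ∈ C, e.1 < a ∧ p ≤ e.2 ∧ e.2 < b) ∧ C.card = LL S p a b := by
  induction a generalizing b with
  | zero => exact ⟨∅, by simp [XC, LL]⟩
  | succ a iha =>
    induction b with
    | zero => exact ⟨∅, by simp [XC, LL]⟩
    | succ b ihb =>
      by_cases hbp : b < p
      · exact ⟨∅, by simp [XC, LL, hbp]⟩
      rw [LL, if_neg hbp]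
      have c1 := iha (b+1) (by omega)
      have c2 := ihb
      have c3 := iha b (by omega)
      have key : ∀ m, (m = LL S p a (b+1) ∨ m = LL S p (a+1) b ∨ (S a b ∧ m = LL S p a b + 1)) →
        ∃ C : Finset (ℕ × ℕ), XC C ∧ (∀ e ∈ C, S e.1 e.2) ∧
          (∀ e ∈ C, e.1 < a+1 ∧ p ≤ e.2 ∧ e.2 < b+1) ∧ C.card = m := by
        rintro m (rfl | rfl | ⟨hs, rfl⟩)
        · obtain ⟨C, h1, h2, h3, h4⟩ := c1
          exact ⟨C, h1, h2, fun e he => by have := h3 e he; omega, h4⟩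
        · obtain ⟨C, h1, h2, h3, h4⟩ := c2
          exact ⟨C, h1, h2, fun e he => by have := h3 e he; omega, h4⟩
        · obtain ⟨C, h1, h2, h3, h4⟩ := c3
          refine ⟨insert (a, b) C, ?_, ?_, ?_, ?_⟩
          · intro e he f hf hne
            rw [Finset.mem_insert] at he hf
            rcases he with rfl | he <;> rcases hf with rfl | hf
            · exact absurd rfl hne
            · have := h3 f hf
              simp only; omega
            · have := h3 e he
              simp only; omega
            · exact h1 e he f hf hne
          · intro e he
            rw [Finset.mem_insert] at he
            rcases he with rfl | he
            · exact hs
            · exact h2 e he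
          · intro e he
            rw [Finset.mem_insert] at he
            rcases he with rfl | he
            · simp only; omega
            · have := h3 e he
              omega
          · rw [Finset.card_insert_of_notMem, h4]
            intro h
            have := h3 _ h
            simp only at this
            omega
      apply key
      split_ifs with hs
      · simp only [hs, true_and]; omega
      · omega

lemma CF_iff {n k : ℕ} (S : ℕ → ℕ → Prop) (hS : ∀ i j, S i j → i < j ∧ j < n) :
    CF k S ↔ ∀ p ≤ n, cnt n p (dem n S (n*n)) (n-p) ≤ k := by
  constructor
  · intro h p hp
    rw [growth_final S hp]
    obtain ⟨C, h1, h2, _, h4⟩ := LL_lower S p p n le_rfl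
    rw [← h4]
    exact h C h1 h2
  · intro h C hC hCS
    rcases C.eq_empty_or_nonempty with rfl | hne
    · simp
    obtain ⟨e, he, hmin⟩ := Finset.exists_min_image C (fun e => e.2) hne
    have he2 := hS _ _ (hCS e he)
    have := h e.2 (by omega)
    rw [growth_final S (by omega)] at this
    refine le_trans (LL_upper S e.2 e.2 n C hC hCS ?_) this
    intro f hf
    have hf2 := hS _ _ (hCS f hf)
    have h3 := hmin f hf
    refine ⟨?_, h3, hf2.2⟩
    by_cases hfe : f = e
    · subst hfe; omega
    · have := hC f hf e he hfe
      omega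

def AddP (S : ℕ → ℕ → Prop) (i j : ℕ) : ℕ → ℕ → Prop := fun a b => S a b ∨ (a = i ∧ b = j)

structure MaxS (n k : ℕ) (S : ℕ → ℕ → Prop) : Prop where
  rng : ∀ i j, S i j → i < j ∧ j < n
  cf : CF k S
  mx : ∀ i j, i < j → j < n → CF k (AddP S i j) → S i j

lemma irrel {n k : ℕ} {S : ℕ → ℕ → Prop} (h : MaxS n k S) {i j : ℕ} (hij : i < j) (hj : j < n)
    (hk : j - i ≤ k ∨ n - k ≤ j - i) (hkn : k < n) : S i j := by
  apply h.mx i j hij hj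
  intro C hC hCS
  by_cases hm : (i, j) ∈ C
  swap
  · apply h.cf C hC
    intro e he
    rcases hCS e he with h1 | ⟨h1, h2⟩
    · exact h1
    · exact absurd (by rw [← h1, ← h2]; exact he) hm
  have h1 := Finset.card_erase_add_one hm
  have hX : ∀ e ∈ C.erase (i, j), (e.1 < i ∧ i < e.2 ∧ e.2 < j ∧ e.2 < n) ∨
      (i < e.1 ∧ e.1 < j ∧ j < e.2 ∧ e.2 < n) := by
    intro e he
    have h3 := Finset.mem_of_mem_erase he
    have hne := Finset.ne_of_mem_erase he
    have h4 := hC e h3 (i, j) hm hne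
    simp only at h4
    rcases hCS e h3 with h5 | ⟨h5, h6⟩
    · have := h.rng _ _ h5; omega
    · omega
  have hinj : ∀ e ∈ C.erase (i, j), ∀ f ∈ C.erase (i, j), e ≠ f →
      e.1 ≠ f.1 ∧ e.1 ≠ f.2 ∧ e.2 ≠ f.1 ∧ e.2 ≠ f.2 := by
    intro e he f hf hne
    have := hC e (Finset.mem_of_mem_erase he) f (Finset.mem_of_mem_erase hf) hne
    have := hX e he
    have := hX f hf
    omega
  rcases hk with hk | hk
  · have : (C.erase (i, j)).card ≤ (Finset.Ioo i j).card := by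
      apply Finset.card_le_card_of_injOn (fun e => if e.1 < i then e.2 else e.1)
      · intro e he
        have := hX e he
        simp only [Finset.coe_Ioo, Set.mem_Ioo]
        split_ifs <;> omega
      · intro e he f hf hef
        by_contra hne
        have := hinj e he f hf hne
        simp only at hef
        split_ifs at hef <;> omega
    rw [Nat.card_Ioo] at this
    omega
  · have : (C.erase (i, j)).card ≤ (Finset.range n \ Finset.Icc i j).card := by
      apply Finset.card_le_card_of_injOn (fun e => if e.1 < i then e.1 else e.2)
      · intro e he
        have := hX e he
        simp only [Finset.coe_sdiff, Finset.coe_range, Finset.coe_Icc, Set.mem_sdiff, Set.mem_Iio,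
          Set.mem_Icc]
        split_ifs <;> omega
      · intro e he f hf hef
        by_contra hne
        have := hinj e he f hf hne
        simp only at hef
        split_ifs at hef <;> omega
    rw [Finset.card_sdiff_of_subset (by intro x; simp; omega), Nat.card_Icc, Finset.card_range] at this
    omega


def qq (n t : ℕ) : ℕ := t % n - t / n - 1

open Classical in
noncomputable def crT (n : ℕ) (S : ℕ → ℕ → Prop) : Finset ℕ :=
  (Finset.range (n*n)).filter (fun t => t / n < t % n ∧ ¬ S (t / n) (t % n))

lemma mem_crT {n : ℕ} {S : ℕ → ℕ → Prop} {t : ℕ} :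
    t ∈ crT n S ↔ t < n*n ∧ t / n < t % n ∧ ¬ S (t / n) (t % n) := by
  classical
  rw [crT, Finset.mem_filter, Finset.mem_range]

lemma mid_pos {n k : ℕ} {S : ℕ → ℕ → Prop} (h : MaxS n k S) (hn : 2 * k + 1 ≤ n) {t : ℕ}
    (h1 : t / n < t % n) (h2 : ¬ S (t / n) (t % n)) : k ≤ qq n t ∧ qq n t + 1 < n - k := by
  have hlt := Nat.mod_lt t (by omega : n > 0)
  have : ¬ (t % n - t / n ≤ k ∨ n - k ≤ t % n - t / n) := fun hc =>
    h2 (irrel h h1 hlt hc (by omega))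
  unfold qq
  omega

open Classical in
lemma dem_succ (n : ℕ) (S : ℕ → ℕ → Prop) (t : ℕ) : dem n S (t+1) =
    if t / n < t % n ∧ ¬ S (t / n) (t % n) ∧
        dem n S t (qq n t) < dem n S t (qq n t + 1) then
      dem n S t * swap (qq n t) (qq n t + 1)
    else dem n S t := by
  rw [dem]; rfl

lemma dem_fix {n k : ℕ} {S : ℕ → ℕ → Prop} (h : MaxS n k S) (hn : 2 * k + 1 ≤ n) (t x : ℕ)
    (hx : x < k ∨ n - k ≤ x) : dem n S t x = x := by
  induction t with
  | zero => simp [dem]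
  | succ t ih =>
    rw [dem_succ]
    split_ifs with hc
    · have := mid_pos h hn hc.1 hc.2.1
      rw [Perm.mul_apply, swap_apply_of_ne_of_ne (by omega) (by omega), ih]
    · exact ih

lemma dem_le {n k : ℕ} {S : ℕ → ℕ → Prop} (h : MaxS n k S) (hn : 2 * k + 1 ≤ n) (x : ℕ)
    (h1 : k ≤ x) (h2 : x < n - k) : dem n S (n*n) x < n - x := by
  by_contra hc
  push Not at hc
  have h3 := (CF_iff S h.rng).mp h.cf (n - x) (by omega)
  rw [show n - (n - x) = x by omega] at h3
  unfold cnt at h3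
  have : insert x (Finset.Ico (n-k) n) ⊆
      (Finset.Ico x n).filter (fun y => n - x ≤ dem n S (n*n) y) := by
    intro y hy
    rw [Finset.mem_insert, Finset.mem_Ico] at hy
    rw [Finset.mem_filter, Finset.mem_Ico]
    rcases hy with rfl | hy
    · omega
    · rw [dem_fix h hn _ y (by omega)]; omega
  have := Finset.card_le_card this
  rw [Finset.card_insert_of_notMem (by simp; omega), Nat.card_Ico] at this
  omega

lemma dem_val {n k : ℕ} {S : ℕ → ℕ → Prop} (h : MaxS n k S) (hn : 2 * k + 1 ≤ n) (v : ℕ) :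
    k ≤ v → v < n - k → dem n S (n*n) (n-1-v) = v := by
  induction v using Nat.strong_induction_on with
  | _ v ih =>
    intro h1 h2
    have h3 := dem_le h hn (n-1-v) (by omega) (by omega)
    by_contra hne
    have h4 : dem n S (n*n) (n-1-v) < v := by omega
    set u := dem n S (n*n) (n-1-v) with hu
    by_cases hk : k ≤ u
    · have := ih u h4 hk (by omega)
      rw [← this] at hu
      have := (dem n S (n*n)).injective hu
      omega
    · have := dem_fix h hn (n*n) u (by omega)
      have := (dem n S (n*n)).injective (this.trans hu)
      omega

lemma dem_final_eq {n k : ℕ} {S S' : ℕ → ℕ → Prop} (h : MaxS n k S) (h' : MaxS n k S')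
    (hn : 2 * k + 1 ≤ n) : dem n S (n*n) = dem n S' (n*n) := by
  ext x
  by_cases hx : x < k ∨ n - k ≤ x
  · rw [dem_fix h hn _ x hx, dem_fix h' hn _ x hx]
  · have h1 := dem_val h hn (n-1-x) (by omega) (by omega)
    have h2 := dem_val h' hn (n-1-x) (by omega) (by omega)
    rw [show n - 1 - (n-1-x) = x by omega] at h1 h2
    rw [h1, h2]

lemma dem_add {n : ℕ} {S : ℕ → ℕ → Prop} {t0 : ℕ}
    (ha : ¬ dem n S t0 (qq n t0) < dem n S t0 (qq n t0 + 1)) (t : ℕ) :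
    dem n (AddP S (t0 / n) (t0 % n)) t = dem n S t := by
  induction t with
  | zero => rfl
  | succ t ih =>
    rw [dem_succ, dem_succ, ih]
    by_cases ht : t = t0
    · subst ht
      rw [if_neg (by tauto), if_neg (by tauto)]
    · have : AddP S (t0 / n) (t0 % n) (t / n) (t % n) ↔ S (t / n) (t % n) := by
        unfold AddP
        constructor
        · rintro (h | ⟨h1, h2⟩)
          · exact h
          · exfalso; apply ht
            rw [← Nat.div_add_mod' t n, h1, h2, Nat.div_add_mod']
        · exact Or.inl
      split_ifs <;> first | rfl | (exfalso; tauto)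

lemma dem_asc {n k : ℕ} {S : ℕ → ℕ → Prop} (h : MaxS n k S) (hn : 2 * k + 1 ≤ n) {t : ℕ}
    (h1 : t / n < t % n) (h2 : ¬ S (t / n) (t % n)) :
    dem n S t (qq n t) < dem n S t (qq n t + 1) := by
  by_contra hc
  have hlt := Nat.mod_lt t (by omega : n > 0)
  apply h2
  apply h.mx _ _ h1 hlt
  rw [CF_iff (n := n)]
  · rw [dem_add hc]
    exact (CF_iff S h.rng).mp h.cf
  · rintro i j (h3 | ⟨rfl, rfl⟩)
    · exact h.rng i j h3
    · exact ⟨h1, hlt⟩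

lemma stt_dem {n k : ℕ} {S : ℕ → ℕ → Prop} (h : MaxS n k S) (hn : 2 * k + 1 ≤ n) (t : ℕ)
    (ht : t ≤ n*n) : stt (qq n) (crT n S) t = dem n S t := by
  induction t with
  | zero => rfl
  | succ t ih =>
    rw [stt, dem_succ, ih (by omega)]
    by_cases hc : t / n < t % n ∧ ¬ S (t / n) (t % n)
    · rw [if_pos, if_pos]
      · exact ⟨hc.1, hc.2, dem_asc h hn hc.1 hc.2⟩
      · rw [mem_crT]; exact ⟨by omega, hc⟩
    · rw [if_neg, if_neg]
      · tauto
      · rw [mem_crT]; tauto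

lemma max_red {n k : ℕ} {S : ℕ → ℕ → Prop} (h : MaxS n k S) (hn : 2 * k + 1 ≤ n) :
    Red (qq n) (crT n S) := by
  intro t ht
  rw [mem_crT] at ht
  rw [stt_dem h hn t ht.1.le]
  exact dem_asc h hn ht.2.1 ht.2.2

def PP (a b : ℕ) : Finset (ℕ × ℕ) :=
  (Finset.Ico a b ×ˢ Finset.Ico a b).filter (fun e => e.1 < e.2)

lemma PP_card {a b : ℕ} (hab : a ≤ b) : 2 * (PP a b).card + (b - a) = (b - a) * (b - a) := by
  induction b, hab using Nat.le_induction with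
  | base => simp [PP]
  | succ b hb ih =>
    have : PP a (b+1) = PP a b ∪ (Finset.Ico a b).image (fun x => (x, b)) := by
      ext ⟨x, y⟩
      simp only [PP, Finset.mem_filter, Finset.mem_product, Finset.mem_Ico, Finset.mem_union,
        Finset.mem_image, Prod.mk.injEq]
      constructor
      · rintro h
        by_cases hy : y = b
        · right; exact ⟨x, by omega, rfl, hy.symm⟩
        · left; omega
      · rintro (h | ⟨z, h1, rfl, rfl⟩) <;> omega
    rw [this, Finset.card_union_of_disjoint, Finset.card_image_of_injective, Nat.card_Ico]
    · obtain ⟨m, rfl⟩ := Nat.exists_eq_add_of_le hb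
      rw [show a + m - a = m by omega] at ih ⊢
      rw [show a + m + 1 - a = m + 1 by omega]
      nlinarith
    · intro x y hxy
      simpa using hxy
    · rw [Finset.disjoint_left]
      rintro ⟨x, y⟩ h1 h2
      simp only [PP, Finset.mem_filter, Finset.mem_product, Finset.mem_Ico,
        Finset.mem_image, Prod.mk.injEq] at h1 h2
      obtain ⟨z, _, _, h3⟩ := h2
      omega

lemma crT_card {n k : ℕ} {S : ℕ → ℕ → Prop} (h : MaxS n k S) (hn : 2 * k + 1 ≤ n) :
    (crT n S).card = (PP k (n-k)).card := by
  have hR := max_red h hn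
  apply Finset.card_nbij
    (fun t => (stt (qq n) (crT n S) t (qq n t), stt (qq n) (crT n S) t (qq n t + 1)))
  · intro t ht
    have hlt := hR t ht
    have ht' := ht
    rw [Finset.mem_coe, mem_crT] at ht'
    obtain ⟨ht1, ht2, ht3⟩ := ht'
    have hm := mid_pos h hn ht2 ht3
    have hr : ∀ z, k ≤ z → z < n - k →
        k ≤ stt (qq n) (crT n S) t z ∧ stt (qq n) (crT n S) t z < n - k := by
      intro z hz1 hz2
      rw [stt_dem h hn t ht1.le]
      by_contra hc
      have := dem_fix h hn t (dem n S t z) (by omega)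
      have := (dem n S t).injective this
      omega
    have r1 := hr _ hm.1 (by omega)
    have r2 := hr (qq n t + 1) (by omega) hm.2
    simp only [PP, Finset.coe_filter, Finset.mem_product, Finset.mem_Ico, Set.mem_ofPred_eq]
    exact ⟨⟨r1, r2⟩, hlt⟩
  · intro s hs t ht hst
    simp only [Prod.mk.injEq] at hst
    exact pair_inj hR hs ht hst.1 hst.2
  · rintro ⟨x, y⟩ hxy
    simp only [PP, Finset.coe_filter, Finset.mem_product, Finset.mem_Ico, Set.mem_ofPred_eq] at hxy
    obtain ⟨⟨hx, hy⟩, hlt⟩ := hxy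
    have hend : IsInv (qq n) (crT n S) x y (n*n) := by
      unfold IsInv
      rw [stt_dem h hn _ le_rfl]
      have e1 := dem_val h hn x hx.1 hx.2
      have e2 := dem_val h hn y hy.1 hy.2
      rw [← Equiv.eq_symm_apply] at e1 e2
      rw [← e1, ← e2]
      omega
    have hst : ¬ IsInv (qq n) (crT n S) x y 0 := by
      unfold IsInv; change ¬ y < x; omega
    have : ∃ t, ¬ IsInv (qq n) (crT n S) x y t ∧ IsInv (qq n) (crT n S) x y (t+1) := by
      by_contra hc
      push Not at hc
      have : ∀ t, ¬ IsInv (qq n) (crT n S) x y t := by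
        intro t
        induction t with
        | zero => exact hst
        | succ t ih => exact hc t ih
      exact this _ hend
    obtain ⟨t, t1, t2⟩ := this
    obtain ⟨m, e1, e2⟩ := inv_new t1 t2
    exact ⟨t, m, by simp only [e1, e2]⟩


def nat2 {n : ℕ} (e : Pair n) : ℕ × ℕ := (e.val.1, e.val.2)

def tim {n : ℕ} (e : Pair n) : ℕ := (e.val.1 : ℕ) * n + e.val.2

lemma nat2_inj {n : ℕ} : Function.Injective (nat2 (n := n)) := by
  rintro ⟨⟨i, j⟩, h⟩ ⟨⟨i', j'⟩, h'⟩ he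
  simp only [nat2, Prod.mk.injEq] at he
  simp only [Subtype.mk.injEq, Prod.mk.injEq]
  exact ⟨Fin.ext he.1, Fin.ext he.2⟩

lemma tim_div {n : ℕ} (e : Pair n) : tim e / n = (nat2 e).1 := by
  have := e.val.2.isLt
  rw [tim, mul_comm, Nat.mul_add_div (by omega), Nat.div_eq_of_lt this, add_zero, nat2]

lemma tim_mod {n : ℕ} (e : Pair n) : tim e % n = (nat2 e).2 := by
  have := e.val.2.isLt
  rw [tim, mul_comm, Nat.mul_add_mod, Nat.mod_eq_of_lt this, nat2]

lemma tim_inj {n : ℕ} : Function.Injective (tim (n := n)) := by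
  intro e f h
  apply nat2_inj
  apply Prod.ext
  · rw [← tim_div, ← tim_div, h]
  · rw [← tim_mod, ← tim_mod, h]

lemma tim_lt {n : ℕ} (e : Pair n) : tim e < n * n := by
  have h2 := e.val.2.isLt
  have h1 : (e.val.1 : ℕ) + 1 ≤ n := e.val.1.isLt
  have := Nat.mul_le_mul_right n h1
  unfold tim
  nlinarith

def SP {n : ℕ} (T : Set (Pair n)) (i j : ℕ) : Prop := ∃ e ∈ T, nat2 e = (i, j)

lemma SP_nat2 {n : ℕ} (T : Set (Pair n)) (e : Pair n) :
    SP T (nat2 e).1 (nat2 e).2 ↔ e ∈ T := by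
  constructor
  · rintro ⟨f, hf, h⟩
    rwa [← nat2_inj h]
  · intro h
    exact ⟨e, h, rfl⟩

lemma exists_pair {n i j : ℕ} (h : i < j) (hj : j < n) : ∃ e : Pair n, nat2 e = (i, j) :=
  ⟨⟨(⟨i, by omega⟩, ⟨j, hj⟩), h⟩, rfl⟩

lemma nat2_lt {n : ℕ} (e : Pair n) : (nat2 e).1 < (nat2 e).2 ∧ (nat2 e).2 < n :=
  ⟨e.prop, e.val.2.isLt⟩

lemma cross_nat2 {n : ℕ} (e f : Pair n) : Cross e f ↔
    ((nat2 e).1 < (nat2 f).1 ∧ (nat2 f).1 < (nat2 e).2 ∧ (nat2 e).2 < (nat2 f).2) ∨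
    ((nat2 f).1 < (nat2 e).1 ∧ (nat2 e).1 < (nat2 f).2 ∧ (nat2 f).2 < (nat2 e).2) := Iff.rfl

lemma crossingFree_iff {n k : ℕ} (T : Set (Pair n)) : CrossingFree n k T ↔ CF k (SP T) := by
  classical
  constructor
  · intro h C hC hS
    by_contra hc
    push Not at hc
    obtain ⟨D, hD, hcard⟩ := Finset.exists_subset_card_eq (Nat.succ_le_of_lt hc)
    apply h
    have him : (Finset.univ.filter (fun e : Pair n => nat2 e ∈ D)).image nat2 = D := by
      ext x
      simp only [Finset.mem_image, Finset.mem_filter, Finset.mem_univ, true_and]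
      constructor
      · rintro ⟨e, he, rfl⟩; exact he
      · intro hx
        obtain ⟨e, _, h2⟩ := hS x (hD hx)
        have h3 : nat2 e = x := h2
        exact ⟨e, by rw [h3]; exact hx, h3⟩
    refine ⟨Finset.univ.filter (fun e : Pair n => nat2 e ∈ D), ?_, ?_, ?_⟩
    · intro e he
      have he' : nat2 e ∈ D := by simpa using he
      exact (SP_nat2 T e).mp (hS _ (hD he'))
    · rw [← Finset.card_image_of_injective _ nat2_inj, him]
      exact hcard
    · intro e he f hf hne
      have he' : nat2 e ∈ D := by simpa using he
      have hf' : nat2 f ∈ D := by simpa using hf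
      exact (cross_nat2 e f).mpr (hC _ (hD he') _ (hD hf') (fun h => hne (nat2_inj h)))
  · rintro h ⟨C, h1, h2, h3⟩
    have := h (C.image nat2) (by
      intro e he f hf hne
      rw [Finset.mem_image] at he hf
      obtain ⟨e', he, rfl⟩ := he
      obtain ⟨f', hf, rfl⟩ := hf
      exact (cross_nat2 e' f').mp (h3 e' he f' hf (fun h => hne (by rw [h])))) (by
      intro e he
      rw [Finset.mem_image] at he
      obtain ⟨e', he, rfl⟩ := he
      exact (SP_nat2 T e').mpr (h1 he))
    rw [Finset.card_image_of_injective _ nat2_inj] at this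
    omega

lemma tri_max {n k : ℕ} {T : Set (Pair n)} (h : IsTriangulation n k T) : MaxS n k (SP T) where
  rng := by
    rintro i j ⟨e, _, h⟩
    have := nat2_lt e
    rw [h] at this
    exact this
  cf := (crossingFree_iff T).mp h.1
  mx := by
    intro i j hij hj hc
    obtain ⟨e, he⟩ := exists_pair hij hj
    have h1 : CrossingFree n k (insert e T) := by
      rw [crossingFree_iff]
      intro C hC hS
      apply hc C hC
      intro x hx
      obtain ⟨f, hf, hfx⟩ := hS x hx
      rcases hf with rfl | hf
      · right
        rw [he] at hfx
        simp only [Prod.mk.injEq] at hfx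
        exact ⟨hfx.1.symm, hfx.2.symm⟩
      · left; exact ⟨f, hf, hfx⟩
    have h2 := h.2 _ h1 (Set.subset_insert _ _)
    exact ⟨e, by rw [← h2]; exact Set.mem_insert _ _, he⟩

open Classical in
noncomputable def tims {n : ℕ} (A : Set (Pair n)) : Finset ℕ :=
  (Finset.univ.filter (fun e => e ∈ A)).image tim

lemma mem_tims {n : ℕ} {A : Set (Pair n)} {t : ℕ} : t ∈ tims A ↔ ∃ e ∈ A, tim e = t := by
  classical
  simp [tims]

lemma tims_card {n : ℕ} (A : Set (Pair n)) : (tims A).card = A.ncard := by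
  classical
  rw [tims, Finset.card_image_of_injective _ tim_inj, ← Set.ncard_coe_finset]
  congr 1
  ext e
  simp

lemma tims_crT {n : ℕ} (T : Set (Pair n)) : tims Tᶜ = crT n (SP T) := by
  ext t
  rw [mem_tims, mem_crT]
  constructor
  · rintro ⟨e, he, rfl⟩
    refine ⟨tim_lt e, ?_⟩
    rw [tim_div, tim_mod, SP_nat2]
    exact ⟨(nat2_lt e).1, he⟩
  · rintro ⟨h1, h2, h3⟩
    have hn : 0 < n := by
      rcases Nat.eq_zero_or_pos n with rfl | h
      · simp at h1
      · exact h
    obtain ⟨e, he⟩ := exists_pair h2 (Nat.mod_lt t hn)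
    refine ⟨e, ?_, ?_⟩
    · intro hT
      exact h3 ⟨e, hT, he⟩
    · have e1 := tim_div e
      have e2 := tim_mod e
      rw [he] at e1 e2
      rw [← Nat.div_add_mod' (tim e) n, e1, e2, Nat.div_add_mod']

lemma tims_sdiff {n : ℕ} (F T : Set (Pair n)) (h : F ⊆ T) : tims Fᶜ \ tims (T \ F) = tims Tᶜ := by
  ext t
  rw [Finset.mem_sdiff, mem_tims, mem_tims, mem_tims]
  constructor
  · rintro ⟨⟨e, he, rfl⟩, h2⟩
    exact ⟨e, fun hT => h2 ⟨e, ⟨hT, he⟩, rfl⟩, rfl⟩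
  · rintro ⟨e, he, rfl⟩
    refine ⟨⟨e, fun hF => he (h hF), rfl⟩, ?_⟩
    rintro ⟨f, hf, hfe⟩
    rw [tim_inj hfe] at hf
    exact he hf.1

lemma card_Pair (n : ℕ) : Nat.card (Pair n) = (PP 0 n).card := by
  classical
  rw [Nat.card_eq_fintype_card, ← Finset.card_univ, ← Finset.card_image_of_injective _ nat2_inj]
  congr 1
  ext ⟨i, j⟩
  simp only [Finset.mem_image, Finset.mem_univ, true_and, PP, Finset.mem_filter,
    Finset.mem_product, Finset.mem_Ico]
  constructor
  · rintro ⟨e, he⟩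
    have := nat2_lt e
    rw [he] at this
    simp only at this
    omega
  · intro h
    exact exists_pair h.2 (by omega)

lemma tri_card {n k : ℕ} {T : Set (Pair n)} (hn : 2 * k + 1 ≤ n) (h : IsTriangulation n k T) :
    T.ncard = k * (2 * n - 2 * k - 1) := by
  have h1 := Set.ncard_add_ncard_compl T
  rw [← tims_card Tᶜ, tims_crT, crT_card (tri_max h) hn, card_Pair] at h1
  have h2 := PP_card (Nat.zero_le n)
  have h3 := PP_card (by omega : k ≤ n - k)
  obtain ⟨m, rfl⟩ := Nat.exists_eq_add_of_le hn
  rw [show 2 * k + 1 + m - k - k = m + 1 by omega] at h3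
  rw [Nat.sub_zero] at h2
  rw [show 2 * (2 * k + 1 + m) - 2 * k - 1 = 2 * k + 2 * m + 1 by omega]
  nlinarith

lemma main_bound (k n : ℕ) (hn : 2 * k + 1 ≤ n) (F : Set (Pair n))
    (hcard : F.ncard = k * (2 * n - 2 * k - 1) - 2) :
    {T : Set (Pair n) | IsTriangulation n k T ∧ F ⊆ T}.ncard ≤ 5 := by
  classical
  set U := {T : Set (Pair n) | IsTriangulation n k T ∧ F ⊆ T} with hU
  rcases Nat.eq_zero_or_pos k with rfl | hk
  · have : U ⊆ {∅} := by
      rintro T ⟨hT, _⟩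
      have := tri_card hn hT
      rw [zero_mul, Set.ncard_eq_zero] at this
      exact this
    have := Set.ncard_le_ncard this
    rw [Set.ncard_singleton] at this
    omega
  rcases U.eq_empty_or_nonempty with he | ⟨T0, hT0⟩
  · rw [he]; simp
  have hbig : 2 ≤ k * (2 * n - 2 * k - 1) := by
    have : 2 ≤ 2 * n - 2 * k - 1 := by omega
    nlinarith
  have hfin : U.Finite := Set.toFinite U
  have hinj : Set.InjOn (fun T : Set (Pair n) => tims (T \ F)) U := by
    intro T hT T' hT' h
    have h' : tims (T \ F) = tims (T' \ F) := h
    have hh : tims Tᶜ = tims T'ᶜ := by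
      rw [← tims_sdiff F T hT.2, ← tims_sdiff F T' hT'.2, h']
    apply compl_injective
    ext e
    constructor
    · intro he
      have : tim e ∈ tims T'ᶜ := by rw [← hh]; exact mem_tims.mpr ⟨e, he, rfl⟩
      obtain ⟨f, hf, hfe⟩ := mem_tims.mp this
      rwa [← tim_inj hfe]
    · intro he
      have : tim e ∈ tims Tᶜ := by rw [hh]; exact mem_tims.mpr ⟨e, he, rfl⟩
      obtain ⟨f, hf, hfe⟩ := mem_tims.mp this
      rwa [← tim_inj hfe]
  have key := five (q := qq n) (N := n*n) (w := dem n (SP T0) (n*n)) (Q := tims Fᶜ)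
    (by
      intro t ht
      obtain ⟨e, _, rfl⟩ := mem_tims.mp ht
      exact tim_lt e)
    (hfin.toFinset.image (fun T => tims (T \ F)))
    (by
      intro A hA
      rw [Finset.mem_image] at hA
      obtain ⟨T, hT, rfl⟩ := hA
      rw [Set.Finite.mem_toFinset] at hT
      have hM := tri_max hT.1
      refine ⟨?_, ?_, ?_, ?_⟩
      · rw [tims_card, Set.ncard_sdiff hT.2, tri_card hn hT.1, hcard]
        omega
      · intro t ht
        obtain ⟨e, he, rfl⟩ := mem_tims.mp ht
        exact mem_tims.mpr ⟨e, he.2, rfl⟩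
      · rw [tims_sdiff F T hT.2, tims_crT]
        exact max_red hM hn
      · rw [tims_sdiff F T hT.2, tims_crT, stt_dem hM hn _ le_rfl]
        exact dem_final_eq hM (tri_max hT0.1) hn)
  rw [Finset.card_image_of_injOn (by rw [Set.Finite.coe_toFinset]; exact hinj)] at key
  rwa [Set.ncard_eq_toFinset_card U hfin]


end KTri

/-- Every `(k+1)`-crossing-free set with `k(2n-2k-1) - 2` elements is contained
in at most five `k`-triangulations of the `n`-gon (links of dimension one are cycles of length
at most five). -/
theorem stmt8 (k n : ℕ) (hn : 2 * k + 1 ≤ n) (F : Set (Pair n))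
    (hF : CrossingFree n k F) (hcard : F.ncard = k * (2 * n - 2 * k - 1) - 2) :
    {T : Set (Pair n) | IsTriangulation n k T ∧ F ⊆ T}.ncard ≤ 5 := by
  exact KTri.main_bound k n hn F hcard
end

section
/- Let d ≥ 1 and let t₁ < t₂ < … < tₙ be real numbers. Set p_i = (1, t_i, …, t_i^{d−1}) ∈ ℝ^d, p′_i = (t_i, t_i², …, t_i^d) ∈ ℝ^d, and q_i = (t_i, t_i²) ∈ ℝ². Then there exist invertible real dn×dn matrices A and B and positive real numbers α_e and β_e for each pair e of {1,…,n} such that, for every pair e, the row of R(p′₁,…,p′ₙ) indexed by e equals α_e times the product of the row of H(p₁,…,pₙ) indexed by e with A, and the row of C_d(q₁,…,qₙ) indexed by e equals β_e times the product of the row of H(p₁,…,pₙ) indexed by e with B. In particular the rows of the three matrices define the same oriented matroid. -/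
open scoped BigOperators

/-- triangular block -/
noncomputable def blk (d : ℕ) (s : ℝ) (c : ℕ → ℕ → ℝ) (x : ℝ) : Matrix (Fin d) (Fin d) ℝ :=
  fun b a => if (b : ℕ) ≤ a then s * (c a b * x ^ ((a : ℕ) - b)) else 0

noncomputable def bigM (d n : ℕ) (s : ℝ) (c : ℕ → ℕ → ℝ) (t : Fin n → ℝ) :
    Matrix (Fin n × Fin d) (Fin n × Fin d) ℝ :=
  (Matrix.blockDiagonal (fun m => blk d s c (t m))).submatrix
    (Equiv.prodComm (Fin n) (Fin d)) (Equiv.prodComm (Fin n) (Fin d))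

theorem blk_det (d : ℕ) (s : ℝ) (c : ℕ → ℕ → ℝ) (hc : ∀ a, c a a = 1) (x : ℝ) :
    (blk d s c x).det = s ^ d := by
  rw [Matrix.det_of_upperTriangular]
  · simp [blk, hc]
  · intro i j h
    have h' : (j : ℕ) < i := h
    simp [blk, not_le.mpr h']

theorem bigM_det (d n : ℕ) (s : ℝ) (hs : s ≠ 0) (c : ℕ → ℕ → ℝ) (hc : ∀ a, c a a = 1)
    (t : Fin n → ℝ) : IsUnit (bigM d n s c t).det := by
  rw [bigM, Matrix.det_submatrix_equiv_self, Matrix.det_blockDiagonal]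
  simp [blk_det d s c hc, hs]

theorem blk_sum (d : ℕ) (s : ℝ) (c : ℕ → ℕ → ℝ) (x y : ℝ) (a : Fin d) :
    ∑ b : Fin d, y ^ (b : ℕ) * blk d s c x b a =
      s * ∑ b ∈ Finset.range ((a : ℕ) + 1), c a b * x ^ ((a : ℕ) - b) * y ^ b := by
  have h1 := Fin.sum_univ_eq_sum_range
    (fun b => y ^ b * (if b ≤ (a : ℕ) then s * (c a b * x ^ ((a : ℕ) - b)) else 0)) d
  have h2 : Finset.range ((a : ℕ) + 1) ⊆ Finset.range d := by
    intro b hb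
    have := a.2
    simp at hb ⊢
    omega
  simp only [blk]
  rw [h1, ← Finset.sum_subset h2, Finset.mul_sum]
  · apply Finset.sum_congr rfl
    intro b hb
    have : b ≤ (a : ℕ) := by simpa [Nat.lt_succ_iff] using hb
    rw [if_pos this]; ring
  · intro b _ hb
    have : ¬ b ≤ (a : ℕ) := by simpa [Nat.lt_succ_iff] using hb
    rw [if_neg this, mul_zero]

theorem bigM_mul (d n : ℕ) (s : ℝ) (c : ℕ → ℕ → ℝ) (t : Fin n → ℝ) (v : Fin n × Fin d → ℝ)
    (m : Fin n) (a : Fin d) :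
    Matrix.vecMul v (bigM d n s c t) (m, a) = ∑ b : Fin d, v (m, b) * blk d s c (t m) b a := by
  simp only [Matrix.vecMul, dotProduct, bigM, Fintype.sum_prod_type]
  rw [Finset.sum_eq_single m]
  · simp [Matrix.blockDiagonal_apply]
  · intro k _ hk
    simp [Matrix.blockDiagonal_apply, hk]
  · simp

theorem hyp_mul (d n : ℕ) (s : ℝ) (c : ℕ → ℕ → ℝ) (t : Fin n → ℝ) (e : Pair n)
    (m : Fin n) (a : Fin d) :
    Matrix.vecMul (hypRow (fun i (a : Fin d) => t i ^ (a : ℕ)) e) (bigM d n s c t) (m, a) =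
      if m = e.val.1 then
        s * ∑ b ∈ Finset.range ((a : ℕ) + 1),
          c a b * t e.val.1 ^ ((a : ℕ) - b) * t e.val.2 ^ b
      else if m = e.val.2 then
        - (s * ∑ b ∈ Finset.range ((a : ℕ) + 1),
          c a b * t e.val.2 ^ ((a : ℕ) - b) * t e.val.1 ^ b)
      else 0 := by
  rw [bigM_mul]
  split_ifs with h1 h2
  · subst h1
    simp [hypRow, blk_sum]
  · subst h2
    simp [hypRow, h1, blk_sum]
  · simp [hypRow, h1, h2]

theorem geomId (x y : ℝ) (a : ℕ) :
    (y - x) * ∑ b ∈ Finset.range (a + 1), 1 * x ^ (a - b) * y ^ b = y ^ (a + 1) - x ^ (a + 1) := by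
  rw [← (Commute.all y x).mul_geom_sum₂ (a + 1)]
  congr 1
  apply Finset.sum_congr rfl
  intro b _
  rw [Nat.add_sub_cancel]; ring

theorem binId (x y : ℝ) (a : ℕ) :
    ∑ b ∈ Finset.range (a + 1), (a.choose b : ℝ) * x ^ (a - b) * y ^ b = (x + y) ^ a := by
  rw [add_comm x y, add_pow]
  apply Finset.sum_congr rfl
  intro b _
  ring

theorem cvecId (d : ℕ) (x y : ℝ) (a : Fin d) :
    cvec d (x, x ^ 2) (y, y ^ 2) a = (y - x) ^ (d - 1) * ((-1) ^ (d - 1) * (x + y) ^ (a : ℕ)) := by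
  have h : d - 1 = (d - 1 - (a : ℕ)) + a := by have := a.2; omega
  have h2 : x ^ 2 - y ^ 2 = (x - y) * (x + y) := by ring
  simp only [cvec]
  rw [h2, mul_pow, ← mul_assoc, ← pow_add, ← h, ← mul_assoc, ← mul_pow]
  congr 2
  ring

/-- For parameters `t₁ < … < tₙ`, with `pᵢ = (1, tᵢ, …, tᵢ^{d-1})`,
`p′ᵢ = (tᵢ, …, tᵢ^d)` and `qᵢ = (tᵢ, tᵢ²)`, the matrices `R(p′)` and `C_d(q)` are obtained from
`H(p)` by multiplying on the right by an invertible matrix and rescaling each row by a positive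
scalar; in particular, the rows of the three matrices define the same oriented matroid. -/
theorem stmt9 (d n : ℕ) (hd : 1 ≤ d) (t : Fin n → ℝ) (ht : StrictMono t) :
    ∃ A B : Matrix (Fin n × Fin d) (Fin n × Fin d) ℝ,
      IsUnit A.det ∧ IsUnit B.det ∧
      ∃ α β : Pair n → ℝ, (∀ e, 0 < α e) ∧ (∀ e, 0 < β e) ∧
        (∀ e : Pair n,
          bjRow (fun i (a : Fin d) => t i ^ ((a : ℕ) + 1)) e =
            α e • Matrix.vecMul (hypRow (fun i (a : Fin d) => t i ^ (a : ℕ)) e) A) ∧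
        (∀ e : Pair n,
          cofRow d (fun i => (t i, t i ^ 2)) e =
            β e • Matrix.vecMul (hypRow (fun i (a : Fin d) => t i ^ (a : ℕ)) e) B) := by
  refine ⟨bigM d n (-1) (fun _ _ => 1) t, bigM d n ((-1) ^ (d - 1)) (fun a b => (a.choose b : ℝ)) t,
    bigM_det _ _ _ (by simp) _ (by simp) _, bigM_det _ _ _ (by simp) _ (by simp) _,
    fun e => t e.val.2 - t e.val.1, fun e => (t e.val.2 - t e.val.1) ^ (d - 1),
    fun e => sub_pos.mpr (ht e.2), fun e => pow_pos (sub_pos.mpr (ht e.2)) _, ?_, ?_⟩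
  · intro e
    ext ⟨m, a⟩
    rw [Pi.smul_apply, hyp_mul, smul_eq_mul]
    simp only [bjRow]
    have g1 := geomId (t e.val.1) (t e.val.2) a
    have g2 := geomId (t e.val.2) (t e.val.1) a
    split_ifs
    · linear_combination g1
    · linear_combination g2
    · simp
  · intro e
    ext ⟨m, a⟩
    rw [Pi.smul_apply, hyp_mul, smul_eq_mul]
    simp only [cofRow, cvecId, binId]
    split_ifs
    · rfl
    · ring
    · simp
end

section
/- Let d ≥ 1 and let q₁,…,qₙ ∈ ℝ² be points in convex position. Let λ = (λ_{ij}) be a vector of coefficients, indexed by the pairs of {1,…,n}, giving a linear dependence among the rows of C_d(q₁,…,qₙ) (i.e., the corresponding linear combination of rows is zero). Fix i ∈ {1,…,n} such that λ_{ij} ≠ 0 for at least one j ≠ i. Define ε_{ij} = λ_{ij} if d is even, and, if d is odd, ε_{ij} = −λ_{ij} for j > i and ε_{ij} = λ_{ij} for j < i. Then the sequence (ε_{i,i+1}, ε_{i,i+2}, …, ε_{i,n}, ε_{i,1}, …, ε_{i,i−1}) changes sign at least d times, where a sign change is a pair of positions r < s in this order whose entries are nonzero and of opposite sign and all entries strictly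 between them are zero. -/
open scoped BigOperators

/-- The coefficient `λ_{ij}` of the unordered pair `{i,j}` (zero if `i = j`). -/
def lamPair {n : ℕ} (lam : Pair n → ℝ) (i j : Fin n) : ℝ :=
  if h : i < j then lam ⟨(i, j), h⟩ else if h' : j < i then lam ⟨(j, i), h'⟩ else 0

/-- `ε_{ij}`: equal to `λ_{ij}` for even `d`; for odd `d` equal to `-λ_{ij}` when `j > i` and to
`λ_{ij}` when `j < i`. -/
def epsSeq {n : ℕ} (d : ℕ) (lam : Pair n → ℝ) (i j : Fin n) : ℝ :=
  if d % 2 = 1 ∧ i < j then - lamPair lam i j else lamPair lam i j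

/-- The vertex at cyclic position `m` after `i`: `i + m + 1 (mod n)`. -/
def cycAfter {n : ℕ} (i : Fin n) (m : ℕ) : Fin n :=
  ⟨((i : ℕ) + m + 1) % n, Nat.mod_lt _ i.pos⟩

theorem aux_zero {N : ℕ} (D : ℕ) (e : Fin N → ℝ) (v : Fin N → ℝ × ℝ)
    (h : ∀ a b : ℕ, a + b = D → ∑ m, e m * ((v m).1 ^ a * (v m).2 ^ b) = 0)
    (L : ℝ × ℝ) (k : ℕ) : ∀ a b : ℕ, a + b + k = D →
      ∑ m, e m * (det2 L (v m) ^ k * ((v m).1 ^ a * (v m).2 ^ b)) = 0 := by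
  induction k with
  | zero => intro a b hab; simpa using h a b (by omega)
  | succ k ih =>
    intro a b hab
    have h1 := ih (a + 1) b (by omega)
    have h2 := ih a (b + 1) (by omega)
    have : ∑ m, e m * (det2 L (v m) ^ (k + 1) * ((v m).1 ^ a * (v m).2 ^ b)) =
        L.1 * ∑ m, e m * (det2 L (v m) ^ k * ((v m).1 ^ a * (v m).2 ^ (b + 1))) -
        L.2 * ∑ m, e m * (det2 L (v m) ^ k * ((v m).1 ^ (a + 1) * (v m).2 ^ b)) := by
      rw [Finset.mul_sum, Finset.mul_sum, ← Finset.sum_sub_distrib]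
      apply Finset.sum_congr rfl
      intro m _
      rw [pow_succ (det2 L (v m)) k]
      nth_rewrite 2 [det2]
      ring
    rw [this, h1, h2]; ring

theorem aux_zero' {N : ℕ} (D : ℕ) (e : Fin N → ℝ) (v : Fin N → ℝ × ℝ)
    (h : ∀ a b : ℕ, a + b = D → ∑ m, e m * ((v m).1 ^ a * (v m).2 ^ b) = 0)
    (L : ℝ × ℝ) (k : ℕ) {ι : Type*} [DecidableEq ι] (w : ι → ℝ × ℝ) (S : Finset ι) :
    ∀ a b : ℕ, a + b + k + S.card = D →
      ∑ m, e m * ((∏ p ∈ S, det2 (w p) (v m)) *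
        (det2 L (v m) ^ k * ((v m).1 ^ a * (v m).2 ^ b))) = 0 := by
  induction S using Finset.induction_on with
  | empty => intro a b hab; simpa using aux_zero D e v h L k a b (by simpa using hab)
  | insert p S hp ih =>
    intro a b hab
    rw [Finset.card_insert_of_notMem hp] at hab
    have h1 := ih (a + 1) b (by omega)
    have h2 := ih a (b + 1) (by omega)
    have : ∑ m, e m * ((∏ p ∈ insert p S, det2 (w p) (v m)) *
        (det2 L (v m) ^ k * ((v m).1 ^ a * (v m).2 ^ b))) =
        (w p).1 * ∑ m, e m * ((∏ p ∈ S, det2 (w p) (v m)) *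
        (det2 L (v m) ^ k * ((v m).1 ^ a * (v m).2 ^ (b + 1)))) -
        (w p).2 * ∑ m, e m * ((∏ p ∈ S, det2 (w p) (v m)) *
        (det2 L (v m) ^ k * ((v m).1 ^ (a + 1) * (v m).2 ^ b))) := by
      rw [Finset.mul_sum, Finset.mul_sum, ← Finset.sum_sub_distrib]
      apply Finset.sum_congr rfl
      intro m _
      rw [Finset.prod_insert hp]
      have : det2 (w p) (v m) = (w p).1 * (v m).2 - (w p).2 * (v m).1 := rfl
      rw [this]
      ring
    rw [this, h1, h2]; ring

theorem det2_add_left (u w v : ℝ × ℝ) : det2 (u + w) v = det2 u v + det2 w v := by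
  simp only [det2, Prod.fst_add, Prod.snd_add]; ring

theorem det2_anti (u v : ℝ × ℝ) : det2 u v = - det2 v u := by
  simp only [det2]; ring

theorem det2_self' (u : ℝ × ℝ) : det2 u u = 0 := by
  simp only [det2]; ring

theorem aux_filler {N : ℕ} (v : Fin N → ℝ × ℝ) (hv0 : ∀ m, v m ≠ 0)
    (hv : ∀ a b, a < b → 0 < det2 (v a) (v b)) : ∃ L : ℝ × ℝ, ∀ m, 0 < det2 L (v m) := by
  rcases N with _ | _ | N
  · exact ⟨0, fun m => m.elim0⟩
  · refine ⟨((v 0).2, -(v 0).1), fun m => ?_⟩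
    obtain rfl : m = 0 := Fin.ext (by have := m.2; simp only [Fin.val_zero]; omega)
    have := hv0 0
    simp only [det2]
    by_contra hc
    apply this
    have h1 : (v 0).1 = 0 := by nlinarith [sq_nonneg (v 0).1, sq_nonneg (v 0).2]
    have h2 : (v 0).2 = 0 := by nlinarith [sq_nonneg (v 0).1, sq_nonneg (v 0).2]
    exact Prod.ext h1 h2
  · refine ⟨v 0 + -v (Fin.last _), fun m => ?_⟩
    have hneg : det2 (-v (Fin.last _)) (v m) = det2 (v m) (v (Fin.last _)) := by
      simp only [det2, Prod.fst_neg, Prod.snd_neg]; ring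
    rw [det2_add_left, hneg]
    rcases eq_or_lt_of_le (Fin.zero_le m) with h | h
    · subst h
      rw [det2_self']
      have := hv 0 (Fin.last _) (Fin.lt_def.2 (by simp))
      linarith
    · have h1 := hv _ _ h
      rcases eq_or_lt_of_le (Fin.le_last m) with h' | h'
      · subst h'
        rw [det2_self']; linarith
      · have := hv _ _ h'
        linarith

theorem aux_main {N : ℕ} (d : ℕ) (hd : 1 ≤ d) (e : Fin N → ℝ) (v : Fin N → ℝ × ℝ)
    (hv0 : ∀ m, v m ≠ 0) (hv : ∀ a b, a < b → 0 < det2 (v a) (v b))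
    (h : ∀ a b : ℕ, a + b = d - 1 → ∑ m, e m * ((v m).1 ^ a * (v m).2 ^ b) = 0)
    (hnz : ∃ m, e m ≠ 0) :
    d ≤ Set.ncard {p : Fin N × Fin N | p.1 < p.2 ∧ e p.1 ≠ 0 ∧ e p.2 ≠ 0 ∧
      e p.1 * e p.2 < 0 ∧ ∀ m, p.1 < m → m < p.2 → e m = 0} := by
  classical
  by_contra hlt
  push Not at hlt
  obtain ⟨L, hL⟩ := aux_filler v hv0 hv
  set T := {p : Fin N × Fin N | p.1 < p.2 ∧ e p.1 ≠ 0 ∧ e p.2 ≠ 0 ∧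
      e p.1 * e p.2 < 0 ∧ ∀ m, p.1 < m → m < p.2 → e m = 0} with hT
  set S := T.toFinset with hS
  have hmem : ∀ p, p ∈ S ↔ p ∈ T := fun p => Set.mem_toFinset
  have hcard : T.ncard = S.card := by
    rw [Set.ncard_eq_toFinset_card']
  rw [hcard] at hlt
  set k := d - 1 - S.card with hk
  have hz := aux_zero' (d - 1) e v h L k (fun p : Fin N × Fin N => v p.1 + v p.2) S 0 0 (by omega)
  simp only [pow_zero, mul_one] at hz
  set g : Fin N × Fin N → Fin N → ℝ := fun p m => det2 (v p.1 + v p.2) (v m) with hg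
  have gneg : ∀ p ∈ S, ∀ m, m ≤ p.1 → g p m < 0 := by
    intro p hp m hm
    have hp := (hmem p).1 hp
    have h1 := hv m p.2 (lt_of_le_of_lt hm hp.1)
    simp only [hg]
    rw [det2_add_left, det2_anti _ (v m), det2_anti (v p.2)]
    rcases eq_or_lt_of_le hm with h | h
    · rw [← h, det2_self']; linarith
    · have := hv _ _ h; linarith
  have gpos : ∀ p ∈ S, ∀ m, p.2 ≤ m → 0 < g p m := by
    intro p hp m hm
    have hp := (hmem p).1 hp
    have h1 := hv p.1 m (lt_of_lt_of_le hp.1 hm)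
    simp only [hg]
    rw [det2_add_left]
    rcases eq_or_lt_of_le hm with h | h
    · rw [← h] at h1 ⊢
      rw [det2_self']; linarith
    · have := hv _ _ h; linarith
  set f : Fin N → ℝ := fun m => e m * ((∏ p ∈ S, g p m) * det2 L (v m) ^ k) with hf
  have hprod : ∀ a b, f a * f b = (e a * e b * ∏ p ∈ S, (g p a * g p b)) *
      (det2 L (v a) ^ k * det2 L (v b) ^ k) := by
    intro a b
    rw [Finset.prod_mul_distrib]; simp only [hf]; ring
  have key : ∀ a b, a < b → e a ≠ 0 → e b ≠ 0 → (∀ m, a < m → m < b → e m = 0) →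
      0 < f a * f b := by
    intro a b hab ha hb hm
    rw [hprod]
    apply mul_pos _ (mul_pos (pow_pos (hL a) _) (pow_pos (hL b) _))
    have hother : ∀ p ∈ S, p ≠ (a, b) → 0 < g p a * g p b := by
      intro p hp hne
      have hpT := (hmem p).1 hp
      by_cases h1 : b ≤ p.1
      · exact mul_pos_of_neg_of_neg (gneg p hp a (hab.le.trans h1)) (gneg p hp b h1)
      by_cases h2 : p.2 ≤ a
      · exact mul_pos (gpos p hp a h2) (gpos p hp b (h2.trans hab.le))
      push Not at h1 h2
      exfalso
      apply hne
      obtain ⟨h3, h4, h5, _, h6⟩ := hpT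
      have e1 : p.1 ≤ a := by
        by_contra hc; push Not at hc; exact h4 (hm _ hc h1)
      have e2 : b ≤ p.2 := by
        by_contra hc; push Not at hc; exact h5 (hm _ h2 hc)
      have e3 : a ≤ p.1 := by
        by_contra hc; push Not at hc; exact ha (h6 _ hc h2)
      have e4 : p.2 ≤ b := by
        by_contra hc; push Not at hc; exact hb (h6 _ h1 hc)
      exact Prod.ext (le_antisymm e1 e3) (le_antisymm e4 e2)
    by_cases hin : (a, b) ∈ S
    · rw [← Finset.mul_prod_erase S _ hin, ← mul_assoc]
      apply mul_pos
      · apply mul_pos_of_neg_of_neg ((hmem _).1 hin).2.2.2.1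
        exact mul_neg_of_neg_of_pos (gneg _ hin a le_rfl) (gpos _ hin b le_rfl)
      · apply Finset.prod_pos
        intro p hp
        exact hother p (Finset.mem_of_mem_erase hp) (Finset.ne_of_mem_erase hp)
    · apply mul_pos
      · rcases lt_or_gt_of_ne (mul_ne_zero ha hb) with hc | hc
        · exact absurd ((hmem _).2 ⟨hab, ha, hb, hc, hm⟩) hin
        · exact hc
      · apply Finset.prod_pos
        intro p hp
        exact hother p hp (fun hc => hin (hc ▸ hp))
  have key2 : ∀ t : ℕ, ∀ a b : Fin N, b.val - a.val ≤ t → a < b → e a ≠ 0 → e b ≠ 0 →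
      0 < f a * f b := by
    intro t
    induction t with
    | zero => intro a b ht hab; have := Fin.lt_def.1 hab; omega
    | succ t ih =>
      intro a b ht hab ha hb
      by_cases hm : ∀ m, a < m → m < b → e m = 0
      · exact key a b hab ha hb hm
      · push Not at hm
        obtain ⟨c, hac, hcb, hc⟩ := hm
        have l1 := Fin.lt_def.1 hac
        have l2 := Fin.lt_def.1 hcb
        have i1 := ih a c (by omega) hac ha hc
        have i2 := ih c b (by omega) hcb hc hb
        have : 0 < (f a * f b) * (f c) ^ 2 := by nlinarith [mul_pos i1 i2]
        exact pos_of_mul_pos_left this (sq_nonneg _)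
  obtain ⟨a, ha⟩ := hnz
  have hfa : f a ≠ 0 := by
    intro hc
    have hpr := hprod a a
    rw [hc] at hpr
    have : 0 < (e a * e a * ∏ p ∈ S, (g p a * g p a)) *
      (det2 L (v a) ^ k * det2 L (v a) ^ k) := by
      apply mul_pos _ (mul_pos (pow_pos (hL a) _) (pow_pos (hL a) _))
      apply mul_pos (mul_self_pos.2 ha)
      apply Finset.prod_pos
      intro p hp
      have hne : g p a ≠ 0 := by
        have hpT := (hmem p).1 hp
        rcases le_or_gt a p.1 with h1 | h1
        · exact (gneg p hp a h1).ne
        rcases le_or_gt p.2 a with h2 | h2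
        · exact (gpos p hp a h2).ne'
        exact absurd (hpT.2.2.2.2 a h1 h2) ha
      exact mul_self_pos.2 hne
    linarith
  have hsum : 0 < ∑ m, f a * f m := by
    apply Finset.sum_pos'
    · intro m _
      by_cases hm : e m = 0
      · have : f m = 0 := by simp only [hf, hm, zero_mul]
        rw [this, mul_zero]
      rcases lt_trichotomy a m with h | h | h
      · exact (key2 _ a m le_rfl h ha hm).le
      · rw [h]; exact mul_self_nonneg _
      · rw [mul_comm]; exact (key2 _ m a le_rfl h hm ha).le
    · exact ⟨a, Finset.mem_univ _, mul_self_pos.2 hfa⟩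
  rw [← Finset.mul_sum] at hsum
  have : ∑ m, f m = 0 := hz
  rw [this, mul_zero] at hsum
  exact lt_irrefl _ hsum

theorem cyc_ne {n : ℕ} (i : Fin n) (m : Fin (n - 1)) : cycAfter i m.val ≠ i := by
  intro h
  have h := congrArg Fin.val h
  simp only [cycAfter] at h
  have := i.2
  have := m.2
  rcases lt_or_ge (i.val + m.val + 1) n with h' | h'
  · rw [Nat.mod_eq_of_lt h'] at h; omega
  · rw [Nat.mod_eq_sub_mod h', Nat.mod_eq_of_lt (by omega)] at h; omega

theorem cyc_val {n : ℕ} (i : Fin n) (m : Fin (n - 1)) :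
    (i.val + m.val + 1 < n ∧ (cycAfter i m.val).val = i.val + m.val + 1) ∨
    (n ≤ i.val + m.val + 1 ∧ (cycAfter i m.val).val = i.val + m.val + 1 - n) := by
  simp only [cycAfter]
  have := i.2
  have := m.2
  rcases lt_or_ge (i.val + m.val + 1) n with h' | h'
  · left; exact ⟨h', Nat.mod_eq_of_lt h'⟩
  · right; refine ⟨h', ?_⟩
    rw [Nat.mod_eq_sub_mod h', Nat.mod_eq_of_lt (by omega)]

theorem cyc_inj {n : ℕ} (i : Fin n) (a b : Fin (n - 1))
    (h : cycAfter i a.val = cycAfter i b.val) : a = b := by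
  have h := congrArg Fin.val h
  have := i.2
  have := a.2
  have := b.2
  apply Fin.ext
  rcases cyc_val i a with ⟨h1, h2⟩ | ⟨h1, h2⟩ <;> rcases cyc_val i b with ⟨h3, h4⟩ | ⟨h3, h4⟩ <;>
    omega

theorem cyc_surj {n : ℕ} (i j : Fin n) (hj : j ≠ i) : ∃ m : Fin (n - 1), cycAfter i m.val = j := by
  have := i.2
  have := j.2
  have hne : j.val ≠ i.val := fun h => hj (Fin.ext h)
  rcases lt_or_ge i.val j.val with h | h
  · refine ⟨⟨j.val - i.val - 1, by omega⟩, Fin.ext ?_⟩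
    rcases cyc_val i ⟨j.val - i.val - 1, by omega⟩ with ⟨h1, h2⟩ | ⟨h1, h2⟩ <;>
      simp only at h1 h2 ⊢ <;> omega
  · refine ⟨⟨j.val + n - i.val - 1, by omega⟩, Fin.ext ?_⟩
    rcases cyc_val i ⟨j.val + n - i.val - 1, by omega⟩ with ⟨h1, h2⟩ | ⟨h1, h2⟩ <;>
      simp only at h1 h2 ⊢ <;> omega

theorem cyc_det {n : ℕ} (q : Fin n → ℝ × ℝ) (hq : ConvexPosition q) (i : Fin n)
    (a b : Fin (n - 1)) (hab : a < b) :
    0 < det2 (q i - q (cycAfter i a.val)) (q i - q (cycAfter i b.val)) := by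
  have := i.2
  have := a.2
  have := b.2
  have hab := Fin.lt_def.1 hab
  rcases cyc_val i a with ⟨h1, h2⟩ | ⟨h1, h2⟩ <;> rcases cyc_val i b with ⟨h3, h4⟩ | ⟨h3, h4⟩
  · have := hq.2 i (cycAfter i a.val) (cycAfter i b.val) (Fin.lt_def.2 (by omega))
      (Fin.lt_def.2 (by omega))
    simp only [det2, Prod.fst_sub, Prod.snd_sub] at this ⊢
    linarith
  · have := hq.2 (cycAfter i b.val) i (cycAfter i a.val) (Fin.lt_def.2 (by omega))
      (Fin.lt_def.2 (by omega))
    simp only [det2, Prod.fst_sub, Prod.snd_sub] at this ⊢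
    linarith
  · omega
  · have := hq.2 (cycAfter i a.val) (cycAfter i b.val) i (Fin.lt_def.2 (by omega))
      (Fin.lt_def.2 (by omega))
    simp only [det2, Prod.fst_sub, Prod.snd_sub] at this ⊢
    linarith

theorem sum_pair {n : ℕ} (h : Fin n → Fin n → ℝ) :
    ∑ e : Pair n, h e.val.1 e.val.2 = ∑ x, ∑ y, if x < y then h x y else 0 := by
  rw [← Fintype.sum_prod_type' (f := fun x y => if x < y then h x y else 0), ← Finset.sum_filter]
  exact (Finset.sum_subtype (p := fun p : Fin n × Fin n => p.1 < p.2)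
    (Finset.univ.filter (fun p : Fin n × Fin n => p.1 < p.2)) (by simp)
    (fun p => h p.1 p.2)).symm

theorem cvec_swap (d : ℕ) (hd : 1 ≤ d) (u w : ℝ × ℝ) (a : Fin d) :
    cvec d u w a = (-1) ^ (d - 1) * cvec d w u a := by
  simp only [cvec]
  rw [← neg_sub w.1 u.1, ← neg_sub w.2 u.2, neg_pow, neg_pow (w.2 - u.2)]
  have : (-1 : ℝ) ^ (d - 1) = (-1) ^ (d - 1 - a.val) * (-1) ^ a.val := by
    rw [← pow_add]; congr 1; have := a.2; omega
  rw [this]; ring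

theorem block_sum {n : ℕ} (d : ℕ) (hd : 1 ≤ d) (q : Fin n → ℝ × ℝ)
    (lam : Pair n → ℝ) (hdep : ∑ e : Pair n, lam e • cofRow d q e = 0) (i : Fin n) (a : Fin d) :
    ∑ j, epsSeq d lam i j * cvec d (q i) (q j) a = 0 := by
  have h := congrFun hdep (i, a)
  simp only [Finset.sum_apply, Pi.smul_apply, smul_eq_mul, Pi.zero_apply] at h
  have h1 : ∀ e : Pair n, lam e * cofRow d q e (i, a) =
      (fun x y => lamPair lam x y * ((if i = x then cvec d (q x) (q y) a else 0) +
        (if i = y then -cvec d (q x) (q y) a else 0))) e.val.1 e.val.2 := by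
    rintro ⟨⟨x, y⟩, hxy⟩
    simp only at hxy
    simp only [cofRow, lamPair, hxy, dif_pos]
    by_cases hx : i = x
    · have : i ≠ y := by rw [hx]; exact hxy.ne
      simp [hx, hxy.ne]
    · simp [hx]
  rw [Finset.sum_congr rfl (fun e _ => h1 e), sum_pair (fun x y => lamPair lam x y *
        ((if i = x then cvec d (q x) (q y) a else 0) +
        (if i = y then -cvec d (q x) (q y) a else 0)))] at h
  have h2 : ∀ x y : Fin n, (if x < y then lamPair lam x y *
      ((if i = x then cvec d (q x) (q y) a else 0) +
        (if i = y then -cvec d (q x) (q y) a else 0)) else 0) =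
      (if i = x then (if x < y then lamPair lam x y * cvec d (q x) (q y) a else 0) else 0) +
      (if i = y then (if x < y then -(lamPair lam x y * cvec d (q x) (q y) a) else 0) else 0) := by
    intro x y
    split_ifs <;> ring
  simp only [h2, Finset.sum_add_distrib] at h
  rw [Finset.sum_comm] at h
  simp only [Finset.sum_ite_eq, Finset.mem_univ, if_true] at h
  rw [← Finset.sum_add_distrib] at h
  have h3 : ∀ j, epsSeq d lam i j * cvec d (q i) (q j) a = (-1) ^ d *
      ((if i < j then lamPair lam i j * cvec d (q i) (q j) a else 0) +
      (if j < i then -(lamPair lam j i * cvec d (q j) (q i) a) else 0)) := by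
    intro j
    obtain ⟨D, rfl⟩ : ∃ D, d = D + 1 := ⟨d - 1, by omega⟩
    have hsym : lamPair lam j i = lamPair lam i j := by
      simp only [lamPair]
      rcases lt_trichotomy i j with h | h | h
      · simp [h, h.not_gt]
      · simp [h]
      · simp [h, h.not_gt]
    rw [cvec_swap (D + 1) hd (q j) (q i) a, hsym]
    have hsq : ((-1 : ℝ) ^ D) * (-1) ^ D = 1 := by rw [← mul_pow]; norm_num
    simp only [epsSeq, Nat.add_sub_cancel]
    rcases lt_trichotomy i j with h | h | h
    · simp only [h, h.not_gt, if_true, if_false, and_true, add_zero]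
      rcases Nat.even_or_odd D with hp | hp
      · have : (D + 1) % 2 = 1 := by obtain ⟨t, rfl⟩ := hp; omega
        simp [this, pow_succ, hp.neg_one_pow]
      · have : ¬ (D + 1) % 2 = 1 := by obtain ⟨t, rfl⟩ := hp; omega
        simp [this, pow_succ, hp.neg_one_pow]
    · subst h; simp [lamPair]
    · simp only [h, h.not_gt, if_true, if_false, and_false, zero_add]
      rw [pow_succ]
      linear_combination (-(lamPair lam i j * cvec (D + 1) (q i) (q j) a)) * hsq
  rw [Finset.sum_congr rfl (fun j _ => h3 j), ← Finset.mul_sum]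
  rw [h, mul_zero]

/-- Let `q₁,…,qₙ` be in convex position and `λ` a linear dependence among the
rows of `C_d(q)`.  If `λ_{ij} ≠ 0` for some `j ≠ i`, then the cyclic sequence
`(ε_{i,i+1},…,ε_{i,i-1})` has at least `d` sign changes, where a sign change is a pair of
positions `r < s` with nonzero entries of opposite sign and only zero entries strictly in
between. -/
theorem stmt12 (d n : ℕ) (hd : 1 ≤ d) (q : Fin n → ℝ × ℝ) (hq : ConvexPosition q)
    (lam : Pair n → ℝ)
    (hdep : ∑ e : Pair n, lam e • cofRow d q e = 0)
    (i : Fin n) (hnz : ∃ j : Fin n, j ≠ i ∧ lamPair lam i j ≠ 0) :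
    d ≤ Set.ncard {p : Fin (n - 1) × Fin (n - 1) |
      p.1 < p.2 ∧
      epsSeq d lam i (cycAfter i p.1.val) ≠ 0 ∧
      epsSeq d lam i (cycAfter i p.2.val) ≠ 0 ∧
      epsSeq d lam i (cycAfter i p.1.val) * epsSeq d lam i (cycAfter i p.2.val) < 0 ∧
      ∀ m : Fin (n - 1), p.1 < m → m < p.2 → epsSeq d lam i (cycAfter i m.val) = 0} := by
  have hself : ∀ j, lamPair lam i j ≠ 0 → epsSeq d lam i j ≠ 0 := by
    intro j hj
    simp only [epsSeq]
    split_ifs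
    · exact neg_ne_zero.2 hj
    · exact hj
  refine aux_main d hd (fun m : Fin (n - 1) => epsSeq d lam i (cycAfter i m.val))
    (fun m => q i - q (cycAfter i m.val)) ?_ (cyc_det q hq i) ?_ ?_
  · intro m hm
    exact cyc_ne i m (hq.1 (sub_eq_zero.1 hm)).symm
  · intro a b hab
    have hb := block_sum d hd q lam hdep i ⟨b, by omega⟩
    have hz : epsSeq d lam i i = 0 := by simp [epsSeq, lamPair]
    rw [← Finset.add_sum_erase _ _ (Finset.mem_univ i), hz, zero_mul, zero_add] at hb
    rw [← hb]
    refine Finset.sum_bij (fun m _ => cycAfter i m.val) ?_ ?_ ?_ ?_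
    · intro m _
      exact Finset.mem_erase.2 ⟨cyc_ne i m, Finset.mem_univ _⟩
    · intro m _ m' _ h
      exact cyc_inj i m m' h
    · intro j hj
      obtain ⟨m, hm⟩ := cyc_surj i j (Finset.ne_of_mem_erase hj)
      exact ⟨m, Finset.mem_univ _, hm⟩
    · intro m _
      have : d - 1 - b = a := by omega
      simp only [cvec, this, Prod.fst_sub, Prod.snd_sub]
  · obtain ⟨j, hj, hl⟩ := hnz
    obtain ⟨m, hm⟩ := cyc_surj i j hj
    exact ⟨m, by simpa only [hm] using hself j hl⟩
end

section
/- Let q₁,…,q₆ ∈ ℝ² be six points in general position (no three collinear), and let G be the set of all 13 pairs of {1,…,6} except {2,5} and {3,6}. Then the space of linear dependences among the rows of C₃(q₁,…,q₆) indexed by G is exactly one-dimensional, and every nonzero such dependence λ satisfies λ_e ≠ 0 for every e ∈ G with e ≠ {1,4}. -/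
open scoped BigOperators

/-- The set of all 13 pairs of `{1,…,6}` except `{2,5}` and `{3,6}` (0-indexed: `(1,4)`,
`(2,5)`). -/
def G13 : Set (Pair 6) :=
  {e | e.val ≠ ((1 : Fin 6), (4 : Fin 6)) ∧ e.val ≠ ((2 : Fin 6), (5 : Fin 6))}

def ed (i j : Fin 6) (h : i < j := by decide) : Pair 6 := ⟨(i, j), h⟩

lemma univ_pair : (Finset.univ : Finset (Pair 6)) =
    {ed 0 1, ed 0 2, ed 0 3, ed 0 4, ed 0 5, ed 1 2, ed 1 3, ed 1 4, ed 1 5,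
      ed 2 3, ed 2 4, ed 2 5, ed 3 4, ed 3 5, ed 4 5} := by decide

lemma sum_pair_s13 {M : Type*} [AddCommMonoid M] (f : Pair 6 → M) : ∑ e, f e =
    f (ed 0 1) + (f (ed 0 2) + (f (ed 0 3) + (f (ed 0 4) + (f (ed 0 5) + (f (ed 1 2) +
    (f (ed 1 3) + (f (ed 1 4) + (f (ed 1 5) + (f (ed 2 3) + (f (ed 2 4) + (f (ed 2 5) +
    (f (ed 3 4) + (f (ed 3 5) + f (ed 4 5)))))))))))))) := by
  rw [univ_pair]
  repeat rw [Finset.sum_insert (by decide)]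
  rw [Finset.sum_singleton]

lemma forall_pair {P : Pair 6 → Prop} : (∀ e, P e) ↔
    P (ed 0 1) ∧ P (ed 0 2) ∧ P (ed 0 3) ∧ P (ed 0 4) ∧ P (ed 0 5) ∧ P (ed 1 2) ∧
    P (ed 1 3) ∧ P (ed 1 4) ∧ P (ed 1 5) ∧ P (ed 2 3) ∧ P (ed 2 4) ∧ P (ed 2 5) ∧
    P (ed 3 4) ∧ P (ed 3 5) ∧ P (ed 4 5) := by
  have : (∀ e, P e) ↔ ∀ e ∈ (Finset.univ : Finset (Pair 6)), P e := by simp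
  rw [this, univ_pair]
  simp only [Finset.forall_mem_insert, Finset.mem_singleton, forall_eq]

/-- Veronese images of three pairwise independent directions are independent. -/
lemma fourvec (p a b c d : ℝ × ℝ) (l1 l2 l3 l4 : ℝ)
    (hbc : det2 (b - p) (c - p) ≠ 0) (hbd : det2 (b - p) (d - p) ≠ 0)
    (hcd : det2 (c - p) (d - p) ≠ 0)
    (e0 : l1 * (p.1 - a.1)^2 + l2 * (p.1 - b.1)^2 + l3 * (p.1 - c.1)^2 + l4 * (p.1 - d.1)^2 = 0)
    (e1 : l1 * ((p.1 - a.1) * (p.2 - a.2)) + l2 * ((p.1 - b.1) * (p.2 - b.2))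
      + l3 * ((p.1 - c.1) * (p.2 - c.2)) + l4 * ((p.1 - d.1) * (p.2 - d.2)) = 0)
    (e2 : l1 * (p.2 - a.2)^2 + l2 * (p.2 - b.2)^2 + l3 * (p.2 - c.2)^2 + l4 * (p.2 - d.2)^2 = 0)
    (h : l1 = 0) : l2 = 0 ∧ l3 = 0 ∧ l4 = 0 := by
  subst h
  simp only [det2, Prod.fst_sub, Prod.snd_sub] at hbc hbd hcd
  refine ⟨?_, ?_, ?_⟩
  · apply (mul_eq_zero.1 _).resolve_right (mul_ne_zero hbc hbd)
    linear_combination (c.2-p.2)*(d.2-p.2)*e0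
      - ((c.2-p.2)*(d.1-p.1)+(c.1-p.1)*(d.2-p.2))*e1 + (c.1-p.1)*(d.1-p.1)*e2
  · apply (mul_eq_zero.1 _).resolve_right (mul_ne_zero hbc hcd)
    linear_combination -((b.2-p.2)*(d.2-p.2)*e0
      - ((b.2-p.2)*(d.1-p.1)+(b.1-p.1)*(d.2-p.2))*e1 + (b.1-p.1)*(d.1-p.1)*e2)
  · apply (mul_eq_zero.1 _).resolve_right (mul_ne_zero hbd hcd)
    linear_combination (c.2-p.2)*(b.2-p.2)*e0
      - ((c.2-p.2)*(b.1-p.1)+(c.1-p.1)*(b.2-p.2))*e1 + (c.1-p.1)*(b.1-p.1)*e2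

/-- all four coefficients vanish as soon as one does -/
lemma fourvec' (p a b c d : ℝ × ℝ) (l1 l2 l3 l4 : ℝ)
    (hab : det2 (a - p) (b - p) ≠ 0) (hac : det2 (a - p) (c - p) ≠ 0)
    (had : det2 (a - p) (d - p) ≠ 0)
    (hbc : det2 (b - p) (c - p) ≠ 0) (hbd : det2 (b - p) (d - p) ≠ 0)
    (hcd : det2 (c - p) (d - p) ≠ 0)
    (e0 : l1 * (p.1 - a.1)^2 + l2 * (p.1 - b.1)^2 + l3 * (p.1 - c.1)^2 + l4 * (p.1 - d.1)^2 = 0)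
    (e1 : l1 * ((p.1 - a.1) * (p.2 - a.2)) + l2 * ((p.1 - b.1) * (p.2 - b.2))
      + l3 * ((p.1 - c.1) * (p.2 - c.2)) + l4 * ((p.1 - d.1) * (p.2 - d.2)) = 0)
    (e2 : l1 * (p.2 - a.2)^2 + l2 * (p.2 - b.2)^2 + l3 * (p.2 - c.2)^2 + l4 * (p.2 - d.2)^2 = 0) :
    (l1 = 0 → l2 = 0 ∧ l3 = 0 ∧ l4 = 0) ∧ (l2 = 0 → l1 = 0) ∧ (l3 = 0 → l1 = 0) ∧
      (l4 = 0 → l1 = 0) := by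
  refine ⟨fourvec p a b c d l1 l2 l3 l4 hbc hbd hcd e0 e1 e2, fun h => ?_, fun h => ?_, fun h => ?_⟩
  · exact (fourvec p b a c d l2 l1 l3 l4 hac had hcd (by linarith) (by linarith) (by linarith) h).1
  · exact (fourvec p c a b d l3 l1 l2 l4 hab had hbd (by linarith) (by linarith) (by linarith) h).1
  · exact (fourvec p d a b c l4 l1 l2 l3 hab hac hbc (by linarith) (by linarith) (by linarith) h).1

lemma key (q : Fin 6 → ℝ × ℝ)
    (hgen : ∀ i j k : Fin 6, i ≠ j → i ≠ k → j ≠ k →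
      det2 (q j - q i) (q k - q i) ≠ 0) (lam : Pair 6 → ℝ)
    (hs : ∀ e, lam e ≠ 0 → e ∈ G13)
    (hk : ∑ e : Pair 6, lam e • cofRow 3 q e = 0)
    (e : Pair 6) (he : e ∈ G13) (he' : e.val ≠ ((0 : Fin 6), (3 : Fin 6))) (h0 : lam e = 0) :
    lam = 0 := by
  have h14 : lam (ed 1 4) = 0 := by
    by_contra h
    exact (hs _ h).1 rfl
  have h25 : lam (ed 2 5) = 0 := by
    by_contra h
    exact (hs _ h).2 rfl
  rw [sum_pair_s13] at hk
  have H : ∀ i a, _ := fun (i : Fin 6) (a : Fin 3) => congrFun hk (i, a)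
  simp only [Pi.add_apply, Pi.smul_apply, Pi.zero_apply, smul_eq_mul, cofRow, cvec, ed] at H
  have V : ∀ i : Fin 6, _ := fun i => And.intro (H i 0) (And.intro (H i 1) (H i 2))
  clear H
  have v0 := V 0
  have v1 := V 1
  have v2 := V 2
  have v4 := V 4
  have v5 := V 5
  clear V hk
  change lam ⟨(1,4), _⟩ = 0 at h14
  change lam ⟨(2,5), _⟩ = 0 at h25
  simp [h14, h25, Fin.ext_iff] at v0 v1 v2 v4 v5
  obtain ⟨a1, b1, c1⟩ := v1
  obtain ⟨a2, b2, c2⟩ := v2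
  obtain ⟨a4, b4, c4⟩ := v4
  obtain ⟨a5, b5, c5⟩ := v5
  obtain ⟨x1, y1, z1, w1⟩ := fourvec' (q 1) (q 0) (q 2) (q 3) (q 5) (- lam (ed 0 1)) (lam (ed 1 2))
    (lam (ed 1 3)) (lam (ed 1 5)) (hgen _ _ _ (by decide) (by decide) (by decide))
    (hgen _ _ _ (by decide) (by decide) (by decide))
    (hgen _ _ _ (by decide) (by decide) (by decide))
    (hgen _ _ _ (by decide) (by decide) (by decide))
    (hgen _ _ _ (by decide) (by decide) (by decide))
    (hgen _ _ _ (by decide) (by decide) (by decide))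
    (by simp only [ed]; linear_combination a1) (by simp only [ed]; linear_combination b1)
    (by simp only [ed]; linear_combination c1)
  obtain ⟨x2, y2, z2, w2⟩ := fourvec' (q 2) (q 0) (q 1) (q 3) (q 4) (- lam (ed 0 2)) (-lam (ed 1 2))
    (lam (ed 2 3)) (lam (ed 2 4)) (hgen _ _ _ (by decide) (by decide) (by decide))
    (hgen _ _ _ (by decide) (by decide) (by decide))
    (hgen _ _ _ (by decide) (by decide) (by decide))
    (hgen _ _ _ (by decide) (by decide) (by decide))
    (hgen _ _ _ (by decide) (by decide) (by decide))
    (hgen _ _ _ (by decide) (by decide) (by decide))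
    (by simp only [ed]; linear_combination a2) (by simp only [ed]; linear_combination b2)
    (by simp only [ed]; linear_combination c2)
  obtain ⟨x4, y4, z4, w4⟩ := fourvec' (q 4) (q 0) (q 2) (q 3) (q 5) (- lam (ed 0 4)) (-lam (ed 2 4))
    (-lam (ed 3 4)) (lam (ed 4 5)) (hgen _ _ _ (by decide) (by decide) (by decide))
    (hgen _ _ _ (by decide) (by decide) (by decide))
    (hgen _ _ _ (by decide) (by decide) (by decide))
    (hgen _ _ _ (by decide) (by decide) (by decide))
    (hgen _ _ _ (by decide) (by decide) (by decide))
    (hgen _ _ _ (by decide) (by decide) (by decide))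
    (by simp only [ed]; linear_combination a4) (by simp only [ed]; linear_combination b4)
    (by simp only [ed]; linear_combination c4)
  obtain ⟨x5, y5, z5, w5⟩ := fourvec' (q 5) (q 0) (q 1) (q 3) (q 4) (- lam (ed 0 5)) (-lam (ed 1 5))
    (-lam (ed 3 5)) (-lam (ed 4 5)) (hgen _ _ _ (by decide) (by decide) (by decide))
    (hgen _ _ _ (by decide) (by decide) (by decide))
    (hgen _ _ _ (by decide) (by decide) (by decide))
    (hgen _ _ _ (by decide) (by decide) (by decide))
    (hgen _ _ _ (by decide) (by decide) (by decide))
    (hgen _ _ _ (by decide) (by decide) (by decide))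
    (by simp only [ed]; linear_combination a5) (by simp only [ed]; linear_combination b5)
    (by simp only [ed]; linear_combination c5)
  clear a1 b1 c1 a2 b2 c2 a4 b4 c4 a5 b5 c5
  simp only [neg_eq_zero] at x1 y1 z1 w1 x2 y2 z2 w2 x4 y4 z4 w4 x5 y5 z5 w5
  have h01 : lam (ed 0 1) = 0 := by
    revert h0 he' he
    revert e
    rw [forall_pair]
    refine ⟨?_, ?_, ?_, ?_, ?_, ?_, ?_, ?_, ?_, ?_, ?_, ?_, ?_, ?_, ?_⟩ <;> intro he he' h0
    case refine_3 => exact absurd rfl he'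
    case refine_8 => exact absurd rfl he.1
    case refine_12 => exact absurd rfl he.2
    all_goals clear he he' hs v0 hgen; grind
  obtain ⟨h12, h13, h15⟩ := x1 h01
  obtain ⟨-, h23, h24⟩ := x2 (y2 h12)
  obtain ⟨-, h34, h45⟩ := x4 (y4 h24)
  obtain ⟨-, h35, -⟩ := x5 (y5 h15)
  have h02 := y2 h12
  have h04 := y4 h24
  have h05 := y5 h15
  have h03 : lam (ed 0 3) = 0 := by
    have g := hgen 0 3 1 (by decide) (by decide) (by decide)
    simp only [ed] at h01 h02 h04 h05 ⊢
    simp only [h01, h02, h04, h05] at v0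
    by_contra hne
    apply g
    simp [hne] at v0
    obtain ⟨r1, r2, r3⟩ := v0
    simp only [det2, Prod.fst_sub, Prod.snd_sub]
    linear_combination -((q 1).2 - (q 0).2) * r1 + ((q 1).1 - (q 0).1) * r3
  funext e
  revert e
  rw [forall_pair]
  exact ⟨h01, h02, h03, h04, h05, h12, h13, h14, h15, h23, h24, h25, h34, h35, h45⟩

/-- The six trivial motions. -/
def mot (x y : ℝ) (k : Fin 6) (a : Fin 3) : ℝ :=
  ![![1, 0, 0], ![0, 1, 0], ![0, 0, 1], ![-y, x, 0], ![0, -y, x], ![y^2, -2*x*y, x^2]] k a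

def motM (q : Fin 6 → ℝ × ℝ) : Matrix (Fin 6) ((Fin 6 × Fin 3) ⊕ Fin 2) ℝ :=
  fun k s => Sum.elim
    (fun ia : Fin 6 × Fin 3 => mot ((q ia.1).1 - (q 0).1) ((q ia.1).2 - (q 0).2) k ia.2)
    (fun _ => 0) s

def rowM (q : Fin 6 → ℝ × ℝ) : Matrix (Pair 6) ((Fin 6 × Fin 3) ⊕ Fin 2) ℝ :=
  fun e s => Sum.elim (cofRow 3 q e)
    (fun t => if t = 0 then (if e = ed 1 4 then 1 else 0) else (if e = ed 2 5 then 1 else 0)) s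

lemma motM_rank (q : Fin 6 → ℝ × ℝ)
    (hgen : det2 (q 1 - q 0) (q 2 - q 0) ≠ 0) : (motM q).rank = 6 := by
  have h : LinearIndependent ℝ (motM q).row := by
    rw [Fintype.linearIndependent_iff]
    intro g hg
    have H : ∀ (i : Fin 6) (a : Fin 3), _ := fun i a => congrFun hg (Sum.inl (i, a))
    simp only [Finset.sum_apply, Pi.smul_apply, Matrix.row, motM, Sum.elim_inl, smul_eq_mul,
      Fin.sum_univ_six, mot, Pi.zero_apply] at H
    have a0 := H 0 0
    have a1 := H 0 1
    have a2 := H 0 2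
    have b0 := H 1 0
    have b1 := H 1 1
    have b2 := H 1 2
    have c0 := H 2 0
    have c1 := H 2 1
    have c2 := H 2 2
    clear H
    simp at a0 a1 a2
    simp only [det2, Prod.fst_sub, Prod.snd_sub] at hgen
    generalize (q 1).1 - (q 0).1 = x1 at *
    generalize (q 1).2 - (q 0).2 = y1 at *
    generalize (q 2).1 - (q 0).1 = x2 at *
    generalize (q 2).2 - (q 0).2 = y2 at *
    simp [a0, a1, a2] at b0 b1 b2 c0 c1 c2
    have aux : ∀ x y w1 w2 : ℝ, (x ≠ 0 ∨ y ≠ 0) → y * w1 = 0 → x * w1 - y * w2 = 0 →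
        x * w2 = 0 → w1 = 0 ∧ w2 = 0 := by
      intro x y w1 w2 h h1 h2 h3
      rcases h with h | h
      · have hw : w2 = 0 := (mul_eq_zero.1 h3).resolve_left h
        subst hw
        exact ⟨(mul_eq_zero.1 (by linarith : x * w1 = 0)).resolve_left h, rfl⟩
      · have hw : w1 = 0 := (mul_eq_zero.1 h1).resolve_left h
        subst hw
        exact ⟨rfl, (mul_eq_zero.1 (by linarith : y * w2 = 0)).resolve_left h⟩
    obtain ⟨p1, p2⟩ := aux x1 y1 (g 3 - g 5 * y1) (g 4 + g 5 * x1)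
      (by by_contra! h; apply hgen; simp [h]) (by linear_combination -b0)
      (by linear_combination b1) (by linear_combination b2)
    obtain ⟨r1, r2⟩ := aux x2 y2 (g 3 - g 5 * y2) (g 4 + g 5 * x2)
      (by by_contra! h; apply hgen; simp [h]) (by linear_combination -c0)
      (by linear_combination c1) (by linear_combination c2)
    have g5 : g 5 = 0 := by
      apply (mul_eq_zero.1 _).resolve_right hgen
      linear_combination x1 * (p1 - r1) + y1 * (p2 - r2)
    have g3 : g 3 = 0 := by simpa [g5] using p1
    have g4 : g 4 = 0 := by simpa [g5] using p2
    intro i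
    fin_cases i
    exacts [a0, a1, a2, g3, g4, g5]
  simpa using h.rank_matrix

lemma mot_row (q : Fin 6 → ℝ × ℝ) : motM q * (rowM q).transpose = 0 := by
  ext k e
  obtain ⟨⟨i, j⟩, hij⟩ := e
  have hne : j ≠ i := ne_of_gt hij
  simp only [Matrix.mul_apply, Fintype.sum_sum_type, motM, rowM, Matrix.transpose_apply,
    Sum.elim_inl, Sum.elim_inr, zero_mul, Finset.sum_const_zero, add_zero, Matrix.zero_apply,
    Fintype.sum_prod_type, cofRow]
  have hs : ∀ m : Fin 6, ∀ F : Fin 3 → ℝ, (∑ a, F a * (if m = i then cvec 3 (q i) (q j) a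
      else if m = j then -cvec 3 (q i) (q j) a else 0)) =
      (if m = i then ∑ a, F a * cvec 3 (q i) (q j) a else 0) +
      (if m = j then -∑ a, F a * cvec 3 (q i) (q j) a else 0) := by
    intro m F
    by_cases h1 : m = i
    · subst h1
      simp [hne.symm]
    · by_cases h2 : m = j <;> simp [h1, h2]
      simp [h2 ▸ h1]
  simp only [hs, Finset.sum_add_distrib, Finset.sum_ite_eq', Finset.mem_univ, if_true]
  simp only [Fin.sum_univ_three, cvec]
  fin_cases k <;> simp [mot] <;> ring

lemma exists_dep (q : Fin 6 → ℝ × ℝ)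
    (hgen : det2 (q 1 - q 0) (q 2 - q 0) ≠ 0) : ∃ lam : Pair 6 → ℝ, lam ≠ 0 ∧
      (∀ e, lam e ≠ 0 → e ∈ G13) ∧ (∑ e : Pair 6, lam e • cofRow 3 q e = 0) := by
  have h1 := Matrix.rank_add_rank_le_card_of_mul_eq_zero (mot_row q)
  rw [motM_rank q hgen, Matrix.rank_transpose] at h1
  have hcard : Fintype.card (Pair 6) = 15 := by decide
  have h2 : ¬ LinearIndependent ℝ (rowM q).row := by
    intro h
    rw [h.rank_matrix, hcard] at h1
    simp at h1
  rw [Fintype.not_linearIndependent_iff] at h2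
  obtain ⟨g, hg, i, hi⟩ := h2
  have H := fun s => congrFun hg s
  simp only [Finset.sum_apply, Pi.smul_apply, Matrix.row, rowM, smul_eq_mul, Pi.zero_apply] at H
  refine ⟨g, fun h => hi (by simp [h]), ?_, ?_⟩
  · have u := H (Sum.inr 0)
    have v := H (Sum.inr 1)
    simp at u v
    intro e he
    constructor
    · intro h
      exact he ((congrArg g (Subtype.ext h)).trans u)
    · intro h
      exact he ((congrArg g (Subtype.ext h)).trans v)
  · funext s
    simpa using H (Sum.inl s)

/-- For six points in general position, the space of linear dependences among
the rows of `C₃(q)` indexed by `G = K₆ - {25, 36}` is exactly one-dimensional, and every nonzero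
dependence is nonzero on every edge of `G` other than `{1,4}`. -/
theorem stmt13 (q : Fin 6 → ℝ × ℝ)
    (hgen : ∀ i j k : Fin 6, i ≠ j → i ≠ k → j ≠ k →
      det2 (q j - q i) (q k - q i) ≠ 0) :
    ∃ lam0 : Pair 6 → ℝ, lam0 ≠ 0 ∧
      (∀ e, lam0 e ≠ 0 → e ∈ G13) ∧
      (∑ e : Pair 6, lam0 e • cofRow 3 q e = 0) ∧
      (∀ lam : Pair 6 → ℝ, (∀ e, lam e ≠ 0 → e ∈ G13) →
        (∑ e : Pair 6, lam e • cofRow 3 q e = 0) → ∃ c : ℝ, lam = c • lam0) ∧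
      (∀ lam : Pair 6 → ℝ, (∀ e, lam e ≠ 0 → e ∈ G13) →
        (∑ e : Pair 6, lam e • cofRow 3 q e = 0) → lam ≠ 0 →
        ∀ e ∈ G13, e.val ≠ ((0 : Fin 6), (3 : Fin 6)) → lam e ≠ 0) := by
  obtain ⟨l0, hl0, hs0, hk0⟩ := exists_dep q (hgen 0 1 2 (by decide) (by decide) (by decide))
  have hG : ed 0 1 ∈ G13 := by constructor <;> decide
  have h1 : l0 (ed 0 1) ≠ 0 := fun h => hl0 (key q hgen l0 hs0 hk0 (ed 0 1) hG (by decide) h)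
  refine ⟨l0, hl0, hs0, hk0, ?_, ?_⟩
  · intro lam hs hk
    refine ⟨lam (ed 0 1) / l0 (ed 0 1), ?_⟩
    rw [← sub_eq_zero]
    refine key q hgen _ ?_ ?_ (ed 0 1) hG (by decide) ?_
    · intro e he
      by_contra hn
      have u : lam e = 0 := by by_contra h; exact hn (hs e h)
      have v : l0 e = 0 := by by_contra h; exact hn (hs0 e h)
      simp [u, v] at he
    · simp only [Pi.sub_apply, Pi.smul_apply, sub_smul, Finset.sum_sub_distrib, hk, smul_assoc,
        ← Finset.smul_sum, hk0, smul_zero, sub_zero]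
    · simp [h1]
  · intro lam hs hk hne e he he' h0
    exact hne (key q hgen lam hs hk e he he' h0)
end

section
/- Let q₁,…,q₆ ∈ ℝ² be six points in convex position, let G be the set of all 13 pairs of {1,…,6} except {2,5} and {3,6}, and let λ be a nonzero linear dependence among the rows of C₃(q₁,…,q₆) indexed by G (which is unique up to scalar). Then λ_{15} ≠ 0, and: (i) if the six points are positively oriented then λ_{14}·λ_{15} > 0; (ii) if they are negatively oriented then λ_{14}·λ_{15} < 0; (iii) if they are in Desargues position then λ_{14} = 0. -/
open scoped BigOperators

/-- The pair `{1,4}` (0-indexed `(0,3)`). -/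
def p03 : Pair 6 := ⟨((0 : Fin 6), (3 : Fin 6)), by decide⟩

/-- The pair `{1,5}` (0-indexed `(0,4)`). -/
def p04 : Pair 6 := ⟨((0 : Fin 6), (4 : Fin 6)), by decide⟩

/-- Six points are positively oriented: the lines `q₁q₄` and `q₃q₆` meet in a point strictly on
the opposite side of the line `q₂q₅` from `q₁` (and `q₆`). -/
def PosOriented (q : Fin 6 → ℝ × ℝ) : Prop :=
  ∃ p : ℝ × ℝ, onLine (q 0) (q 3) p ∧ onLine (q 2) (q 5) p ∧
    det2 (q 4 - q 1) (p - q 1) * det2 (q 4 - q 1) (q 0 - q 1) < 0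

/-- Six points are negatively oriented: the lines `q₁q₄` and `q₃q₆` meet in a point strictly on
the same side of the line `q₂q₅` as `q₁` (and `q₆`). -/
def NegOriented (q : Fin 6 → ℝ × ℝ) : Prop :=
  ∃ p : ℝ × ℝ, onLine (q 0) (q 3) p ∧ onLine (q 2) (q 5) p ∧
    0 < det2 (q 4 - q 1) (p - q 1) * det2 (q 4 - q 1) (q 0 - q 1)

/-- Six points are in Desargues position: the lines `q₁q₄`, `q₂q₅` and `q₃q₆` are concurrent. -/
def DesarguesPos (q : Fin 6 → ℝ × ℝ) : Prop :=
  ∃ p : ℝ × ℝ, onLine (q 0) (q 3) p ∧ onLine (q 1) (q 4) p ∧ onLine (q 2) (q 5) p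

theorem three_indep (x1 y1 x2 y2 x3 y3 a b c : ℝ)
    (h12 : x1 * y2 - y1 * x2 ≠ 0) (h13 : x1 * y3 - y1 * x3 ≠ 0) (h23 : x2 * y3 - y2 * x3 ≠ 0)
    (e0 : a * x1 ^ 2 + b * x2 ^ 2 + c * x3 ^ 2 = 0)
    (e1 : a * (x1 * y1) + b * (x2 * y2) + c * (x3 * y3) = 0)
    (e2 : a * y1 ^ 2 + b * y2 ^ 2 + c * y3 ^ 2 = 0) : a = 0 ∧ b = 0 ∧ c = 0 := by
  refine ⟨?_, ?_, ?_⟩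
  · have : a * ((x1 * y2 - y1 * x2) * (x1 * y3 - y1 * x3)) = 0 := by
      linear_combination (y2 * y3) * e0 - (x2 * y3 + x3 * y2) * e1 + x2 * x3 * e2
    simpa [h12, h13] using this
  · have : b * ((x1 * y2 - y1 * x2) * (x2 * y3 - y2 * x3)) = 0 := by
      linear_combination -(y1 * y3) * e0 + (x1 * y3 + x3 * y1) * e1 - x1 * x3 * e2
    simpa [h12, h23] using this
  · have : c * ((x1 * y3 - y1 * x3) * (x2 * y3 - y2 * x3)) = 0 := by
      linear_combination (y1 * y2) * e0 - (x1 * y2 + x2 * y1) * e1 + x1 * x2 * e2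
    simpa [h13, h23] using this

theorem row_eq (q : Fin 6 → ℝ × ℝ) (lam : Pair 6 → ℝ) (L : Fin 6 → Fin 6 → ℝ)
    (hL : ∀ e : Pair 6, lam e = L e.val.1 e.val.2)
    (hL0 : ∀ i j, ¬ i < j → L i j = 0)
    (hdep : ∑ e : Pair 6, lam e • cofRow 3 q e = 0) (m : Fin 6) (a : Fin 3) :
    ∑ i, ∑ j, L i j * (if m = i then cvec 3 (q i) (q j) a
      else if m = j then - cvec 3 (q i) (q j) a else 0) = 0 := by
  have h := congrFun hdep (m, a)
  rw [Finset.sum_apply] at h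
  simp only [Pi.smul_apply, smul_eq_mul, Pi.zero_apply, cofRow, hL] at h
  rw [← Finset.sum_subtype (Finset.univ.filter (fun p : Fin 6 × Fin 6 => p.1 < p.2)) (by simp)
    (fun p : Fin 6 × Fin 6 => L p.1 p.2 * (if m = p.1 then cvec 3 (q p.1) (q p.2) a
      else if m = p.2 then - cvec 3 (q p.1) (q p.2) a else 0))] at h
  rw [Finset.sum_filter_of_ne, Fintype.sum_prod_type] at h
  · exact h
  · intro p _ hp
    by_contra hc
    exact hp (by rw [hL0 _ _ hc, zero_mul])

/-- For six points in convex position and `λ` a nonzero dependence among the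
rows of `C₃(q)` supported on `G = K₆ - {25,36}`: `λ₁₅ ≠ 0`, and `λ₁₄·λ₁₅` is positive, negative
or zero according to whether the points are positively oriented, negatively oriented or in
Desargues position. -/
theorem stmt14 (q : Fin 6 → ℝ × ℝ) (hq : ConvexPosition q)
    (lam : Pair 6 → ℝ) (hsupp : ∀ e, lam e ≠ 0 → e ∈ G13)
    (hdep : ∑ e : Pair 6, lam e • cofRow 3 q e = 0) (hne : lam ≠ 0) :
    lam p04 ≠ 0 ∧
    (PosOriented q → 0 < lam p03 * lam p04) ∧
    (NegOriented q → lam p03 * lam p04 < 0) ∧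
    (DesarguesPos q → lam p03 = 0) := by
  classical
  obtain ⟨L, hLdef⟩ : ∃ L : Fin 6 → Fin 6 → ℝ,
      L = fun i j => if h : i < j then lam ⟨(i, j), h⟩ else 0 := ⟨_, rfl⟩
  have hL : ∀ e : Pair 6, lam e = L e.val.1 e.val.2 := by
    rintro ⟨⟨i, j⟩, h⟩
    have h' : i < j := h
    simp [hLdef, h']
  have hL0 : ∀ i j, ¬ i < j → L i j = 0 := by
    intro i j h
    simp [hLdef, h]
  have z14 : L 1 4 = 0 := by
    by_contra hc
    have := hsupp ⟨(1, 4), by decide⟩ (by rw [hL]; exact hc)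
    exact this.1 rfl
  have z25 : L 2 5 = 0 := by
    by_contra hc
    have := hsupp ⟨(2, 5), by decide⟩ (by rw [hL]; exact hc)
    exact this.2 rfl
  have hne' : ¬ ∀ i j, L i j = 0 := by
    intro hz
    exact hne (funext fun e => by rw [hL, hz]; rfl)
  rw [hL p04, hL p03]
  change L 0 4 ≠ 0 ∧ (PosOriented q → 0 < L 0 3 * L 0 4) ∧
    (NegOriented q → L 0 3 * L 0 4 < 0) ∧ (DesarguesPos q → L 0 3 = 0)
  have R := row_eq q lam L hL hL0 hdep
  have D := hq.2
  obtain ⟨X, hX⟩ : ∃ X : Fin 6 → ℝ, X = fun i => (q i).1 := ⟨_, rfl⟩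
  obtain ⟨Y, hY⟩ : ∃ Y : Fin 6 → ℝ, Y = fun i => (q i).2 := ⟨_, rfl⟩
  have hX' : ∀ i, (q i).1 = X i := fun i => by rw [hX]
  have hY' : ∀ i, (q i).2 = Y i := fun i => by rw [hY]
  simp only [det2, Prod.fst_sub, Prod.snd_sub, hX', hY'] at D
  have low : ∀ i j : Fin 6, j ≤ i → L i j = 0 := fun i j h => hL0 i j (not_lt.mpr h)
  have R0 : ∀ m, _ := fun m => R m 0
  have R1 : ∀ m, _ := fun m => R m 1
  have R2 : ∀ m, _ := fun m => R m 2
  simp only [cvec, hX', hY'] at R0 R1 R2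
  clear R hX hY hdep hsupp hne
  have V : ∀ m : Fin 6, _ ∧ _ ∧ _ := fun m => ⟨R0 m, R1 m, R2 m⟩
  have V0 := V 0
  have V1 := V 1
  have V2 := V 2
  have V4 := V 4
  have V5 := V 5
  clear V R0 R1 R2
  simp [Fin.sum_univ_six, z14, z25, low 0 0, low 1 0, low 2 0, low 3 0, low 4 0, low 5 0,
    low 1 1, low 2 1, low 3 1, low 4 1, low 5 1, low 2 2, low 3 2, low 4 2, low 5 2,
    low 4 3, low 5 3, low 4 4, low 5 4, low 5 5] at V0 V1 V2 V4 V5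
  obtain ⟨A0, A1, A2⟩ := V0
  obtain ⟨B0, B1, B2⟩ := V1
  obtain ⟨C0, C1, C2⟩ := V2
  obtain ⟨E0, E1, E2⟩ := V4
  obtain ⟨F0, F1, F2⟩ := V5
  have g013 := D 0 1 3 (by decide) (by decide)
  have g014 := D 0 1 4 (by decide) (by decide)
  have g015 := D 0 1 5 (by decide) (by decide)
  have g023 := D 0 2 3 (by decide) (by decide)
  have g024 := D 0 2 4 (by decide) (by decide)
  have g025 := D 0 2 5 (by decide) (by decide)
  have g034 := D 0 3 4 (by decide) (by decide)
  have g035 := D 0 3 5 (by decide) (by decide)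
  have g045 := D 0 4 5 (by decide) (by decide)
  have g134 := D 1 3 4 (by decide) (by decide)
  have g145 := D 1 4 5 (by decide) (by decide)
  have g235 := D 2 3 5 (by decide) (by decide)
  have g245 := D 2 4 5 (by decide) (by decide)
  have g345 := D 3 4 5 (by decide) (by decide)
  have g012 := D 0 1 2 (by decide) (by decide)
  have g123 := D 1 2 3 (by decide) (by decide)
  have g125 := D 1 2 5 (by decide) (by decide)
  have g135 := D 1 3 5 (by decide) (by decide)
  have g234 := D 2 3 4 (by decide) (by decide)
  have g124 := D 1 2 4 (by decide) (by decide)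
  have h04 : L 0 4 ≠ 0 := by
    intro z04
    apply hne'
    obtain ⟨z24, z34, z45⟩ := three_indep (X 2 - X 4) (Y 2 - Y 4) (X 3 - X 4) (Y 3 - Y 4) (X 4 - X 5) (Y 4 - Y 5)
      (-L 2 4) (-L 3 4) (L 4 5)
      (by intro h; linarith [g234, h])
      (by intro h; linarith [g245, h])
      (by intro h; linarith [g345, h])
      (by linear_combination E0 + (X 0 - X 4) ^ 2 * z04)
      (by linear_combination E1 + ((X 0 - X 4) * (Y 0 - Y 4)) * z04)
      (by linear_combination E2 + (Y 0 - Y 4) ^ 2 * z04)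
    have z24 : L 2 4 = 0 := by linarith
    have z34 : L 3 4 = 0 := by linarith
    obtain ⟨z02, z12, z23⟩ := three_indep (X 0 - X 2) (Y 0 - Y 2) (X 1 - X 2) (Y 1 - Y 2) (X 2 - X 3) (Y 2 - Y 3)
      (-L 0 2) (-L 1 2) (L 2 3)
      (by intro h; linarith [g012, h])
      (by intro h; linarith [g023, h])
      (by intro h; linarith [g123, h])
      (by linear_combination C0 - (X 2 - X 4) ^ 2 * z24)
      (by linear_combination C1 - ((X 2 - X 4) * (Y 2 - Y 4)) * z24)
      (by linear_combination C2 - (Y 2 - Y 4) ^ 2 * z24)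
    have z02 : L 0 2 = 0 := by linarith
    have z12 : L 1 2 = 0 := by linarith
    obtain ⟨z05, z15, z35⟩ := three_indep (X 0 - X 5) (Y 0 - Y 5) (X 1 - X 5) (Y 1 - Y 5) (X 3 - X 5) (Y 3 - Y 5)
      (-L 0 5) (-L 1 5) (-L 3 5)
      (by intro h; linarith [g015, h])
      (by intro h; linarith [g035, h])
      (by intro h; linarith [g135, h])
      (by linear_combination F0 + (X 4 - X 5) ^ 2 * z45)
      (by linear_combination F1 + ((X 4 - X 5) * (Y 4 - Y 5)) * z45)
      (by linear_combination F2 + (Y 4 - Y 5) ^ 2 * z45)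
    have z05 : L 0 5 = 0 := by linarith
    have z15 : L 1 5 = 0 := by linarith
    have z35 : L 3 5 = 0 := by linarith
    obtain ⟨z01, z13, -⟩ := three_indep (X 0 - X 1) (Y 0 - Y 1) (X 1 - X 3) (Y 1 - Y 3) (X 1 - X 5) (Y 1 - Y 5)
      (-L 0 1) (L 1 3) (L 1 5)
      (by intro h; linarith [g013, h])
      (by intro h; linarith [g015, h])
      (by intro h; linarith [g135, h])
      (by linear_combination B0 - (X 1 - X 2) ^ 2 * z12)
      (by linear_combination B1 - ((X 1 - X 2) * (Y 1 - Y 2)) * z12)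
      (by linear_combination B2 - (Y 1 - Y 2) ^ 2 * z12)
    have z01 : L 0 1 = 0 := by linarith
    obtain ⟨z03, -, -⟩ := three_indep (X 0 - X 3) (Y 0 - Y 3) (X 0 - X 4) (Y 0 - Y 4) (X 0 - X 5) (Y 0 - Y 5)
      (L 0 3) (L 0 4) (L 0 5)
      (by intro h; linarith [g034, h])
      (by intro h; linarith [g035, h])
      (by intro h; linarith [g045, h])
      (by linear_combination A0 - (X 0 - X 1) ^ 2 * z01 - (X 0 - X 2) ^ 2 * z02)
      (by linear_combination A1 - ((X 0 - X 1) * (Y 0 - Y 1)) * z01 - ((X 0 - X 2) * (Y 0 - Y 2)) * z02)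
      (by linear_combination A2 - (Y 0 - Y 1) ^ 2 * z01 - (Y 0 - Y 2) ^ 2 * z02)
    intro i j
    by_cases h : i < j
    · fin_cases i <;> fin_cases j <;> first | assumption | exact absurd h (by decide)
    · exact hL0 i j h
  refine ⟨h04, ?_⟩
  have k4 : L 4 5 * (((X 4 - X 2) * (Y 5 - Y 2) - (Y 4 - Y 2) * (X 5 - X 2)) * ((X 4 - X 3) * (Y 5 - Y 3) - (Y 4 - Y 3) * (X 5 - X 3))) = L 0 4 * (((X 2 - X 0) * (Y 4 - Y 0) - (Y 2 - Y 0) * (X 4 - X 0)) * ((X 3 - X 0) * (Y 4 - Y 0) - (Y 3 - Y 0) * (X 4 - X 0))) := by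
    linear_combination (Y 4 - Y 2) * (Y 4 - Y 3) * E0 - ((X 4 - X 2) * (Y 4 - Y 3) + (X 4 - X 3) * (Y 4 - Y 2)) * E1 + (X 4 - X 2) * (X 4 - X 3) * E2
  have k5 : L 0 5 * (((X 1 - X 0) * (Y 5 - Y 0) - (Y 1 - Y 0) * (X 5 - X 0)) * ((X 3 - X 0) * (Y 5 - Y 0) - (Y 3 - Y 0) * (X 5 - X 0))) = -L 4 5 * (((X 4 - X 1) * (Y 5 - Y 1) - (Y 4 - Y 1) * (X 5 - X 1)) * ((X 4 - X 3) * (Y 5 - Y 3) - (Y 4 - Y 3) * (X 5 - X 3))) := by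
    linear_combination -((Y 5 - Y 1) * (Y 5 - Y 3) * F0 - ((X 5 - X 1) * (Y 5 - Y 3) + (X 5 - X 3) * (Y 5 - Y 1)) * F1 + (X 5 - X 1) * (X 5 - X 3) * F2)
  have k0 : L 0 3 * (((X 1 - X 0) * (Y 3 - Y 0) - (Y 1 - Y 0) * (X 3 - X 0)) * ((X 2 - X 0) * (Y 3 - Y 0) - (Y 2 - Y 0) * (X 3 - X 0))) + L 0 4 * (((X 1 - X 0) * (Y 4 - Y 0) - (Y 1 - Y 0) * (X 4 - X 0)) * ((X 2 - X 0) * (Y 4 - Y 0) - (Y 2 - Y 0) * (X 4 - X 0))) + L 0 5 * (((X 1 - X 0) * (Y 5 - Y 0) - (Y 1 - Y 0) * (X 5 - X 0)) * ((X 2 - X 0) * (Y 5 - Y 0) - (Y 2 - Y 0) * (X 5 - X 0))) = 0 := by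
    linear_combination (Y 0 - Y 1) * (Y 0 - Y 2) * A0 - ((X 0 - X 1) * (Y 0 - Y 2) + (X 0 - X 2) * (Y 0 - Y 1)) * A1 + (X 0 - X 1) * (X 0 - X 2) * A2
  have kS : ((X 2 - X 0) * (Y 5 - Y 0) - (Y 2 - Y 0) * (X 5 - X 0)) * ((X 4 - X 1) * (Y 5 - Y 1) - (Y 4 - Y 1) * (X 5 - X 1)) * ((X 3 - X 0) * (Y 4 - Y 0) - (Y 3 - Y 0) * (X 4 - X 0)) - ((X 1 - X 0) * (Y 4 - Y 0) - (Y 1 - Y 0) * (X 4 - X 0)) * ((X 4 - X 2) * (Y 5 - Y 2) - (Y 4 - Y 2) * (X 5 - X 2)) * ((X 3 - X 0) * (Y 5 - Y 0) - (Y 3 - Y 0) * (X 5 - X 0))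
      = ((X 4 - X 0) * (Y 5 - Y 0) - (Y 4 - Y 0) * (X 5 - X 0)) * (((X 2 - X 0) * (Y 5 - Y 0) - (Y 2 - Y 0) * (X 5 - X 0)) * ((X 3 - X 1) * (Y 4 - Y 1) - (Y 3 - Y 1) * (X 4 - X 1)) - ((X 3 - X 2) * (Y 5 - Y 2) - (Y 3 - Y 2) * (X 5 - X 2)) * ((X 1 - X 0) * (Y 4 - Y 0) - (Y 1 - Y 0) * (X 4 - X 0))) := by ring
  have kW : ∀ p : ℝ × ℝ, onLine (q 0) (q 3) p → onLine (q 2) (q 5) p →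
      (((X 2 - X 0) * (Y 5 - Y 0) - (Y 2 - Y 0) * (X 5 - X 0)) + ((X 3 - X 2) * (Y 5 - Y 2) - (Y 3 - Y 2) * (X 5 - X 2))) * ((X 4 - X 1) * (p.2 - Y 1) - (Y 4 - Y 1) * (p.1 - X 1))
        = -(((X 2 - X 0) * (Y 5 - Y 0) - (Y 2 - Y 0) * (X 5 - X 0)) * ((X 3 - X 1) * (Y 4 - Y 1) - (Y 3 - Y 1) * (X 4 - X 1)) - ((X 3 - X 2) * (Y 5 - Y 2) - (Y 3 - Y 2) * (X 5 - X 2)) * ((X 1 - X 0) * (Y 4 - Y 0) - (Y 1 - Y 0) * (X 4 - X 0))) := by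
    intro p h1 h2
    simp only [onLine, det2, Prod.fst_sub, Prod.snd_sub, hX', hY'] at h1 h2
    linear_combination ((X 4 - X 1) * (Y 5 - Y 2) - (Y 4 - Y 1) * (X 5 - X 2)) * h1
      - ((X 4 - X 1) * (Y 3 - Y 0) - (Y 4 - Y 1) * (X 3 - X 0)) * h2
  generalize hd013 : (X 1 - X 0) * (Y 3 - Y 0) - (Y 1 - Y 0) * (X 3 - X 0) = d013 at *
  generalize hd014 : (X 1 - X 0) * (Y 4 - Y 0) - (Y 1 - Y 0) * (X 4 - X 0) = d014 at *
  generalize hd015 : (X 1 - X 0) * (Y 5 - Y 0) - (Y 1 - Y 0) * (X 5 - X 0) = d015 at *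
  generalize hd023 : (X 2 - X 0) * (Y 3 - Y 0) - (Y 2 - Y 0) * (X 3 - X 0) = d023 at *
  generalize hd024 : (X 2 - X 0) * (Y 4 - Y 0) - (Y 2 - Y 0) * (X 4 - X 0) = d024 at *
  generalize hd025 : (X 2 - X 0) * (Y 5 - Y 0) - (Y 2 - Y 0) * (X 5 - X 0) = d025 at *
  generalize hd034 : (X 3 - X 0) * (Y 4 - Y 0) - (Y 3 - Y 0) * (X 4 - X 0) = d034 at *
  generalize hd035 : (X 3 - X 0) * (Y 5 - Y 0) - (Y 3 - Y 0) * (X 5 - X 0) = d035 at *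
  generalize hd045 : (X 4 - X 0) * (Y 5 - Y 0) - (Y 4 - Y 0) * (X 5 - X 0) = d045 at *
  generalize hd134 : (X 3 - X 1) * (Y 4 - Y 1) - (Y 3 - Y 1) * (X 4 - X 1) = d134 at *
  generalize hd145 : (X 4 - X 1) * (Y 5 - Y 1) - (Y 4 - Y 1) * (X 5 - X 1) = d145 at *
  generalize hd235 : (X 3 - X 2) * (Y 5 - Y 2) - (Y 3 - Y 2) * (X 5 - X 2) = d235 at *
  generalize hd245 : (X 4 - X 2) * (Y 5 - Y 2) - (Y 4 - Y 2) * (X 5 - X 2) = d245 at *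
  generalize hd345 : (X 4 - X 3) * (Y 5 - Y 3) - (Y 4 - Y 3) * (X 5 - X 3) = d345 at *
  have key : L 0 3 * (d013 * d023 * d245 * d035)
      = L 0 4 * d024 * d045 * (d025 * d134 - d235 * d014) := by
    apply mul_right_cancel₀ g345.ne'
    linear_combination d245 * d035 * d345 * k0 - d025 * d245 * d345 * k5 + d025 * d145 * d345 * k4
      + L 0 4 * d024 * d345 * kS
  have hP : 0 < d013 * d023 * d245 * d035 := by positivity
  have hQ : 0 < L 0 4 ^ 2 * (d024 * d045 * (d025 + d235)) := by positivity
  have hm : ∀ w, (d025 + d235) * w = -(d025 * d134 - d235 * d014) →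
      (L 0 3 * L 0 4) * (d013 * d023 * d245 * d035)
        = (-w) * (L 0 4 ^ 2 * (d024 * d045 * (d025 + d235))) := by
    intro w hw
    linear_combination L 0 4 * key + L 0 4 ^ 2 * d024 * d045 * hw
  refine ⟨?_, ?_, ?_⟩
  · rintro ⟨p, h1, h2, h3⟩
    have hw := hm _ (kW p h1 h2)
    simp only [det2, Prod.fst_sub, Prod.snd_sub, hX', hY'] at h3
    generalize (X 4 - X 1) * (p.2 - Y 1) - (Y 4 - Y 1) * (p.1 - X 1) = w at *
    have e : (X 4 - X 1) * (Y 0 - Y 1) - (Y 4 - Y 1) * (X 0 - X 1) = d014 := by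
      rw [← hd014]; ring
    rw [e] at h3
    have hneg : w < 0 := by
      by_contra hc
      exact absurd h3 (not_lt.mpr (mul_nonneg (not_lt.mp hc) g014.le))
    exact pos_of_mul_pos_left (hw ▸ mul_pos (neg_pos.mpr hneg) hQ) hP.le
  · rintro ⟨p, h1, h2, h3⟩
    have hw := hm _ (kW p h1 h2)
    simp only [det2, Prod.fst_sub, Prod.snd_sub, hX', hY'] at h3
    generalize (X 4 - X 1) * (p.2 - Y 1) - (Y 4 - Y 1) * (p.1 - X 1) = w at *
    have e : (X 4 - X 1) * (Y 0 - Y 1) - (Y 4 - Y 1) * (X 0 - X 1) = d014 := by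
      rw [← hd014]; ring
    rw [e] at h3
    have hpos : 0 < w := pos_of_mul_pos_left h3 g014.le
    by_contra hc
    have a1 := mul_nonneg (not_lt.mp hc) hP.le
    have a2 := mul_pos hpos hQ
    linarith
  · rintro ⟨p, h1, h14, h2⟩
    have hw := hm _ (kW p h1 h2)
    simp only [onLine, det2, Prod.fst_sub, Prod.snd_sub, hX', hY'] at h14
    rw [h14, neg_zero, zero_mul] at hw
    rcases mul_eq_zero.mp hw with h | h
    · exact (mul_eq_zero.mp h).resolve_right h04
    · exact absurd h hP.ne'
end
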